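/- Let (X, ‖·‖) be a real Banach space. The following conditions are equivalent: (i) the dual unit ball (B_{X*}, w*) is a Corson compact; (ii) for every norm |||·||| on X equivalent to ‖·‖, the Banach space (X, |||·|||) has a 1-projectional skeleton; (iii) for every norm |||·||| on X equivalent to ‖·‖, the dual unit ball of (X, |||·|||), equipped with the weak* topology, has a retractional skeleton. -/

import Mathlib

/-!
The implications run in a cycle.

(i) ⇒ (ii). If the dual ball embeds into a `Σ`-product, then so does the dual ball of every
equivalent norm `N`. Close countable sets of vectors and functionals under rational combinations,
under choosing norming functionals, and under adding countably many vectors which determine the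
countably many nonzero coordinates of each functional. Each closed set is a `GoodPair`: by
Hahn-Banach, `X` is the direct sum of the closed span of its vectors and the annihilator of its
functionals, with a projection of `N`-norm one (`GoodPair.exists_proj`). The projections indexed by
countable closed sets form a skeleton (`has1ProjectionalSkeletonWrt_of_corson`).

(ii) ⇒ (iii). The adjoints of the projections, restricted to the dual ball, are the retractions of
a skeleton (`hasRetractionalSkeleton_of_proj`).

(iii) ⇒ (i). If some retractional skeleton of a dual ball is full, i.e. its retracts cover the ball,
the ball is Corson: the ball is countably tight, closing-off yields norm-one projections for closed
sets of all cardinalities, and an induction on the cardinality, decomposing along a continuous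
well-ordered chain of closed sets, produces linearly dense vectors on which each functional has
countable support (`isCorsonCompact_of_full`).

It remains to see that a skeleton of the original ball is full when every renorming has a skeleton
(`full_of_all_skeletons`). If a functional `p` is not induced, the values `r s p` yield a sequence
`d ξ`, `ξ < ω₁`, of functionals which is eventually zero at each vector but triangular against a
bounded sequence of vectors `F η` (`exists_longSeq`). Take the equivalent norm whose dual ball is
generated by the translates `e₃ + d ξ`, the Euclidean circle spanned by `e₃` and `e₁`, and a small
ball. Circle points near `e₃` are exposed by single vectors, so they are induced by every skeleton,
and hence so is their limit `e₃`. On the other hand, induced points `z α` that agree with `e₃ + d α`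
on countably many suitable vectors converge to `e₃`, while the vectors `F η` keep `e₃` away from the
closure of every countable part of the family. This contradicts the countable tightness of induced
sets (`not_skeleton_renorm`).
-/

open Filter Topology TopologicalSpace Set

universe u v

/-- A retractional skeleton in a topological space `K`: a family `r s : C(K, K)` of continuous
retractions indexed by an up-directed (nonempty) partially ordered set `Γ` such that
(i) each `r s` has metrizable range and the net `(r s x)` converges to `x`;
(ii) `s ≤ t` implies `r s ∘ r t = r t ∘ r s = r s`;
(iii) each strictly increasing sequence has a supremum `t` and `r t x = lim_n r (f n) x`. -/
structure RetractionalSkeleton (K : Type u) [TopologicalSpace K] : Type (u + 1) where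
  Γ : Type u
  [po : PartialOrder Γ]
  [ne : Nonempty Γ]
  directed : ∀ s t : Γ, ∃ w, s ≤ w ∧ t ≤ w
  r : Γ → C(K, K)
  isRetraction : ∀ s, ∀ x : K, r s (r s x) = r s x
  metrizable : ∀ s, MetrizableSpace ↥(Set.range (r s))
  tendsto_id : ∀ x : K, Tendsto (fun s => r s x) atTop (𝓝 x)
  comp_eq_of_le : ∀ s t : Γ, s ≤ t → ∀ x : K, r s (r t x) = r s x ∧ r t (r s x) = r s x
  sup_seq : ∀ f : ℕ → Γ, StrictMono f → ∃ t : Γ, IsLUB (Set.range f) t ∧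
    ∀ x : K, Tendsto (fun n => r (f n) x) atTop (𝓝 (r t x))

/-- The set `D(𝔰) = ⋃ s, r s [K]` induced by a retractional skeleton. -/
def RetractionalSkeleton.inducedSet {K : Type u} [TopologicalSpace K]
    (𝔰 : RetractionalSkeleton K) : Set K := ⋃ s, Set.range (𝔰.r s)

/-- `D` is induced by an r-skeleton in `K`. -/
def IsInducedByRSkeleton {K : Type u} [TopologicalSpace K] (D : Set K) : Prop :=
  ∃ 𝔰 : RetractionalSkeleton K, 𝔰.inducedSet = D

/-- `K` has a retractional skeleton. -/
def HasRetractionalSkeleton (K : Type u) [TopologicalSpace K] : Prop :=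
  Nonempty (RetractionalSkeleton K)

/-- `K` is a Corson compact space: it is homeomorphic to a compact subset of
`Σ(Γ) = {x ∈ ℝ^Γ : x γ ≠ 0 for at most countably many γ}` for some set `Γ`. -/
def IsCorsonCompact (K : Type u) [TopologicalSpace K] : Prop :=
  ∃ (Γ : Type u) (A : Set (Γ → ℝ)), IsCompact A ∧
    (∀ x ∈ A, {γ | x γ ≠ 0}.Countable) ∧ Nonempty (K ≃ₜ ↥A)

/-- A projectional skeleton in a normed space `X`: a family of bounded linear projections
indexed by an up-directed (nonempty) partially ordered set `Γ` such that
(i) `X = ⋃ s, P s [X]` and each `P s [X]` is separable;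
(ii) `s ≤ t` implies `P s ∘ P t = P t ∘ P s = P s`;
(iii) each strictly increasing sequence has a supremum `t` with
`P t [X] = closure (⋃ n, P (f n) [X])`. -/
structure ProjectionalSkeleton (X : Type u) [NormedAddCommGroup X] [NormedSpace ℝ X] :
    Type (u + 1) where
  Γ : Type u
  [po : PartialOrder Γ]
  [ne : Nonempty Γ]
  directed : ∀ s t : Γ, ∃ w, s ≤ w ∧ t ≤ w
  P : Γ → X →L[ℝ] X
  idem : ∀ s, ∀ x : X, P s (P s x) = P s x
  separable : ∀ s, IsSeparable (Set.range (P s))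
  covers : ∀ x : X, ∃ s, x ∈ Set.range (P s)
  comp_eq_of_le : ∀ s t : Γ, s ≤ t → ∀ x : X, P s (P t x) = P s x ∧ P t (P s x) = P s x
  sup_seq : ∀ f : ℕ → Γ, StrictMono f → ∃ t : Γ, IsLUB (Set.range f) t ∧
    (Set.range (P t) : Set X) = closure (⋃ n, Set.range (P (f n)))

/-- `X` has a 1-projectional skeleton: a projectional skeleton with `‖P s‖ ≤ 1` for all `s`. -/
def Has1ProjectionalSkeleton (X : Type u) [NormedAddCommGroup X] [NormedSpace ℝ X] : Prop :=
  ∃ 𝔰 : ProjectionalSkeleton X, ∀ s, ‖𝔰.P s‖ ≤ 1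

/-- The closed unit ball of the dual of `X`, as a subset of the weak* dual `(X*, w*)`. -/
def dualBall (X : Type u) [NormedAddCommGroup X] [NormedSpace ℝ X] : Set (WeakDual ℝ X) :=
  {φ | ∀ x : X, |φ x| ≤ ‖x‖}

/-- `N` is a norm on `X` equivalent to the given norm `‖·‖`. -/
def IsEquivNorm {X : Type u} [NormedAddCommGroup X] [NormedSpace ℝ X] (N : X → ℝ) : Prop :=
  (∀ (a : ℝ) (x : X), N (a • x) = |a| * N x) ∧
  (∀ x y : X, N (x + y) ≤ N x + N y) ∧
  (∃ c C : ℝ, 0 < c ∧ ∀ x : X, c * ‖x‖ ≤ N x ∧ N x ≤ C * ‖x‖)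

/-- The Banach space `(X, N)` has a 1-projectional skeleton: since an equivalent norm induces
the same topology, this means a projectional skeleton whose projections satisfy
`N (P s x) ≤ N x`, i.e. have norm at most `1` with respect to `N`. -/
def Has1ProjectionalSkeletonWrt {X : Type u} [NormedAddCommGroup X] [NormedSpace ℝ X]
    (N : X → ℝ) : Prop :=
  ∃ 𝔰 : ProjectionalSkeleton X, ∀ s, ∀ x : X, N (𝔰.P s x) ≤ N x

/-- The closed unit ball of the dual of `(X, N)`, as a subset of the weak* dual. -/
def dualBallWrt {X : Type u} [NormedAddCommGroup X] [NormedSpace ℝ X] (N : X → ℝ) :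
    Set (WeakDual ℝ X) :=
  {φ | ∀ x : X, |φ x| ≤ N x}

/-! ### Dual balls of equivalent norms -/

section Dual

variable {X : Type u} [NormedAddCommGroup X] [NormedSpace ℝ X]

theorem IsEquivNorm.nonneg {N : X → ℝ} (hN : IsEquivNorm N) (x : X) : 0 ≤ N x := by
  obtain ⟨_, _, c, C, hc, h⟩ := hN
  exact le_trans (by positivity) (h x).1

theorem IsEquivNorm.exists_bound {N : X → ℝ} (hN : IsEquivNorm N) :
    ∃ C : ℝ, 0 < C ∧ ∀ x, N x ≤ C * ‖x‖ := by
  obtain ⟨_, _, c, C, hc, h⟩ := hN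
  refine ⟨max C 1, by positivity, fun x => (h x).2.trans ?_⟩
  gcongr
  exact le_max_left _ _

theorem isEquivNorm_norm : IsEquivNorm (fun x : X => ‖x‖) :=
  ⟨fun a x => by simp [norm_smul], norm_add_le, 1, 1, one_pos, fun x => by simp⟩

theorem IsEquivNorm.neg {N : X → ℝ} (hN : IsEquivNorm N) (x : X) : N (-x) = N x := by
  have := hN.1 (-1) x
  simpa using this

theorem IsEquivNorm.continuous {N : X → ℝ} (hN : IsEquivNorm N) : Continuous N := by
  obtain ⟨C, hC, hb⟩ := hN.exists_bound
  have key : ∀ x y, N x - N y ≤ C * ‖x - y‖ := fun x y => by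
    have := hN.2.1 (x - y) y
    rw [sub_add_cancel] at this
    linarith [hb (x - y)]
  refine continuous_iff_continuousAt.2 fun x => ?_
  refine tendsto_iff_norm_sub_tendsto_zero.2 ?_
  refine squeeze_zero (fun _ => norm_nonneg _) (g := fun y => C * ‖y - x‖) (fun y => ?_) ?_
  · rw [Real.norm_eq_abs, abs_le]
    constructor
    · have := key x y
      rw [norm_sub_rev] at this
      linarith
    · exact key y x
  · have : Continuous fun y : X => C * ‖y - x‖ := by fun_prop
    simpa using this.tendsto x

theorem isCompact_dualBallWrt {N : X → ℝ} (hN : IsEquivNorm N) :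
    IsCompact (dualBallWrt N) := by
  obtain ⟨C, hC, hb⟩ := hN.exists_bound
  refine (WeakDual.isCompact_closedBall (𝕜 := ℝ) (E := X) 0 C).of_isClosed_subset ?_ ?_
  · have : dualBallWrt N = ⋂ x : X, {φ : WeakDual ℝ X | |φ x| ≤ N x} := by
      ext φ; simp [dualBallWrt]
    rw [this]
    exact isClosed_iInter fun x =>
      isClosed_le ((WeakDual.eval_continuous x).abs) continuous_const
  · intro φ hφ
    simp only [mem_preimage, Metric.mem_closedBall, dist_zero_right]
    exact ContinuousLinearMap.opNorm_le_bound _ hC.le fun x => (hφ x).trans (hb x)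

/-- Separation of a point from a weak* closed convex set by an evaluation functional. -/
theorem exists_eval_separating {L : Set (WeakDual ℝ X)} (hL : Convex ℝ L) (hc : IsClosed L)
    {f : WeakDual ℝ X} (hf : f ∉ L) : ∃ z : X, ∃ u : ℝ, (∀ φ ∈ L, φ z < u) ∧ u < f z := by
  have : LocallyConvexSpace ℝ (WeakDual ℝ X) :=
    inferInstanceAs (LocallyConvexSpace ℝ (WeakBilin (topDualPairing ℝ X)))
  obtain ⟨g, u, h1, h2⟩ := geometric_hahn_banach_closed_point hL hc hf
  obtain ⟨z, hz⟩ := LinearMap.dualEmbedding_surjective (topDualPairing ℝ X) g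
  have hz' : ∀ φ : WeakDual ℝ X, g φ = φ z := fun φ => by rw [← hz]; rfl
  exact ⟨z, u, fun φ hφ => by rw [← hz']; exact h1 φ hφ, by rw [← hz']; exact h2⟩

/-- A linear functional dominated by an equivalent norm, as an element of the dual ball. -/
theorem exists_mem_dualBallWrt {N : X → ℝ} (hN : IsEquivNorm N) (f : X →ₗ[ℝ] ℝ)
    (hf : ∀ x, f x ≤ N x) : ∃ φ ∈ dualBallWrt N, ∀ x, (φ : WeakDual ℝ X) x = f x := by
  have habs : ∀ x, |f x| ≤ N x := fun x => abs_le.2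
    ⟨by have := hf (-x); rw [map_neg, hN.neg] at this; linarith, hf x⟩
  obtain ⟨C, hC, hb⟩ := hN.exists_bound
  let g : X →L[ℝ] ℝ := f.mkContinuous C fun x => (habs x).trans (hb x)
  exact ⟨StrongDual.toWeakDual g, habs, fun x => rfl⟩

/-- Hahn-Banach: a sublinear functional dominated by `N` is attained at any point. -/
theorem exists_support {N : X → ℝ} (hN : IsEquivNorm N) (q : X → ℝ)
    (q_hom : ∀ c : ℝ, 0 < c → ∀ x, q (c • x) = c * q x)
    (q_add : ∀ x y, q (x + y) ≤ q x + q y) (hq : ∀ x, q x ≤ N x) (x₀ : X) :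
    ∃ φ ∈ dualBallWrt N, (φ : WeakDual ℝ X) x₀ = q x₀ ∧ ∀ x, (φ : WeakDual ℝ X) x ≤ q x := by
  have q0 : q 0 = 0 := by
    have := q_hom 2 two_pos 0
    rw [smul_zero] at this
    linarith
  by_cases h0 : x₀ = 0
  · obtain ⟨g, -, hg⟩ := exists_extension_of_le_sublinear (⟨⊥, 0⟩ : X →ₗ.[ℝ] ℝ) q q_hom q_add
      (fun x => by
        have : (x : X) = 0 := (Submodule.mem_bot ℝ).1 x.2
        simp [this, q0])
    obtain ⟨φ, hφ, h⟩ := exists_mem_dualBallWrt hN g fun x => (hg x).trans (hq x)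
    exact ⟨φ, hφ, by rw [h0, q0, map_zero], fun x => (h x).trans_le (hg x)⟩
  · obtain ⟨g, hg1, hg⟩ := exists_extension_of_le_sublinear
      (LinearPMap.mkSpanSingleton (K := ℝ) x₀ (q x₀) h0) q q_hom q_add
      (by
        rintro ⟨x, hx⟩
        obtain ⟨t, rfl⟩ := Submodule.mem_span_singleton.1 hx
        refine (LinearPMap.mkSpanSingleton'_apply x₀ (q x₀) _ t hx).trans_le ?_
        simp only [smul_eq_mul, RingHom.id_apply]
        rcases lt_trichotomy t 0 with ht | ht | ht
        · have h1 := q_hom (-t) (by linarith) x₀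
          have h2 := q_add (t • x₀) ((-t) • x₀)
          rw [← add_smul, add_neg_cancel, zero_smul, q0, h1] at h2
          linarith
        · simp [ht, q0]
        · rw [q_hom t ht])
    obtain ⟨φ, hφ, h⟩ := exists_mem_dualBallWrt hN g fun x => (hg x).trans (hq x)
    refine ⟨φ, hφ, ?_, fun x => (h x).trans_le (hg x)⟩
    have := hg1 ⟨x₀, Submodule.mem_span_singleton_self x₀⟩
    rw [h]
    refine this.trans ?_
    exact LinearPMap.mkSpanSingleton_apply _ _ h0 _

theorem exists_norming {N : X → ℝ} (hN : IsEquivNorm N) (x₀ : X) :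
    ∃ φ ∈ dualBallWrt N, (φ : WeakDual ℝ X) x₀ = N x₀ := by
  obtain ⟨φ, hφ, h, -⟩ := exists_support hN N
    (fun c hc x => by rw [hN.1, abs_of_pos hc]) hN.2.1 (fun _ => le_rfl) x₀
  exact ⟨φ, hφ, h⟩

/-- A continuous map from a dual ball to a metrizable space depends on countably many
elements of `X`. -/
theorem exists_countable_determining {N : X → ℝ} (hN : IsEquivNorm N) {T : Type v}
    [TopologicalSpace T] [MetrizableSpace T] (g : dualBallWrt N → T) (hg : Continuous g) :
    ∃ S : Set X, S.Countable ∧ ∀ φ ψ : dualBallWrt N,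
      (∀ x ∈ S, (φ : WeakDual ℝ X) x = (ψ : WeakDual ℝ X) x) → g φ = g ψ := by
  let := metrizableSpaceMetric T
  have : CompactSpace (dualBallWrt N) := isCompact_iff_compactSpace.1 (isCompact_dualBallWrt hN)
  have hfin : ∀ n : ℕ, ∃ F : Finset X, {w : dualBallWrt N × dualBallWrt N |
      (1 : ℝ) / (n + 1) ≤ dist (g w.1) (g w.2)} ⊆ ⋃ x ∈ F,
        {w | (w.1 : WeakDual ℝ X) x ≠ (w.2 : WeakDual ℝ X) x} := by
    intro n
    refine IsCompact.elim_finite_subcover (IsClosed.isCompact ?_) _ (fun x => ?_) ?_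
    · exact isClosed_le continuous_const (by fun_prop)
    · have h1 : Continuous fun w : dualBallWrt N × dualBallWrt N => (w.1 : WeakDual ℝ X) x :=
        (WeakDual.eval_continuous x).comp (by fun_prop)
      have h2 : Continuous fun w : dualBallWrt N × dualBallWrt N => (w.2 : WeakDual ℝ X) x :=
        (WeakDual.eval_continuous x).comp (by fun_prop)
      exact isOpen_ne_fun h1 h2
    · rintro ⟨φ, ψ⟩ hw
      simp only [mem_iUnion, mem_ofPred_eq]
      by_contra! hcon
      have : φ = ψ := Subtype.ext (DFunLike.ext _ _ hcon)
      simp only [mem_ofPred_eq, this, dist_self] at hw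
      have : (0 : ℝ) < 1 / (n + 1) := by positivity
      linarith
  choose F hF using hfin
  refine ⟨⋃ n, (F n : Set X), countable_iUnion fun n => (F n).countable_toSet, ?_⟩
  intro φ ψ h
  by_contra hne
  obtain ⟨n, hn⟩ := exists_nat_one_div_lt (dist_pos.2 hne)
  have := hF n (show (φ, ψ) ∈ _ from hn.le)
  simp only [mem_iUnion, mem_ofPred_eq] at this
  obtain ⟨x, hx, hx'⟩ := this
  exact hx' (h x (mem_iUnion.2 ⟨n, hx⟩))

end Dual

/-! ### Projections generated by pairs of sets -/

section Proj

variable {X : Type u} [NormedAddCommGroup X] [NormedSpace ℝ X]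

/-- A pair of sets `S ⊆ X` and `B ⊆ B_{(X, N)*}`, both stable under the rational operations, such
that `B` norms `S` and `S` separates the points of the weak* closure of `B` from `0`. Such a pair
generates a projection of `N`-norm one onto the closure of `S`. -/
structure GoodPair (N : X → ℝ) (S : Set X) (B : Set (WeakDual ℝ X)) : Prop where
  zero_mem : (0 : X) ∈ S
  comb_mem : ∀ x ∈ S, ∀ y ∈ S, ∀ q r : ℚ, (q : ℝ) • x + (r : ℝ) • y ∈ S
  dual_sub : B ⊆ dualBallWrt N
  dual_zero : (0 : WeakDual ℝ X) ∈ B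
  dual_comb : ∀ φ ∈ B, ∀ ψ ∈ B, ∀ q r : ℚ, |q| + |r| ≤ 1 → (q : ℝ) • φ + (r : ℝ) • ψ ∈ B
  norming : ∀ x ∈ S, ∃ φ ∈ B, φ x = N x
  sep : ∀ φ ∈ closure B, (∀ x ∈ S, φ x = 0) → φ = 0

variable {N : X → ℝ} {S : Set X} {B : Set (WeakDual ℝ X)}

/-- The closure of `S` is a real subspace. -/
def GoodPair.range (h : GoodPair N S B) : Submodule ℝ X where
  carrier := closure S
  zero_mem' := subset_closure h.zero_mem
  add_mem' := by
    intro a b ha hb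
    refine map_mem_closure₂ continuous_add ha hb fun x hx y hy => ?_
    simpa using h.comb_mem x hx y hy 1 1
  smul_mem' := by
    intro c x hx
    have hc : c ∈ closure (Set.range ((↑) : ℚ → ℝ)) := Rat.denseRange_cast c
    refine map_mem_closure₂ continuous_smul hc hx ?_
    rintro _ ⟨q, rfl⟩ y hy
    simpa using h.comb_mem y hy y hy q 0

/-- The annihilator of `B`. -/
def GoodPair.ker (_h : GoodPair N S B) : Submodule ℝ X where
  carrier := {x | ∀ φ ∈ B, φ x = 0}
  zero_mem' := fun φ _ => map_zero φ
  add_mem' := fun ha hb φ hφ => by rw [map_add, ha φ hφ, hb φ hφ, add_zero]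
  smul_mem' := fun c x hx φ hφ => by rw [map_smul, hx φ hφ, smul_zero]

theorem GoodPair.neg_mem (h : GoodPair N S B) {φ : WeakDual ℝ X} (hφ : φ ∈ B) : -φ ∈ B := by
  have := h.dual_comb φ hφ 0 h.dual_zero (-1) 0 (by simp)
  simpa using this

theorem GoodPair.convex_closure (h : GoodPair N S B) : Convex ℝ (closure B) := by
  intro φ hφ ψ hψ a b ha hb hab
  obtain rfl : b = 1 - a := by linarith
  have ha1 : a ≤ 1 := by linarith
  -- The rationals of `[0, 1]` are dense in `[0, 1]`.
  have hmem : a ∈ closure ((↑) '' {q : ℚ | 0 ≤ q ∧ q ≤ 1} : Set ℝ) := by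
    rcases eq_or_lt_of_le ha with h0 | h0
    · exact subset_closure ⟨0, by simp, by simp [← h0]⟩
    rw [Metric.mem_closure_iff]
    intro ε hε
    obtain ⟨q, hq1, hq2⟩ := exists_rat_btwn (show max 0 (a - ε) < a by
      rw [max_lt_iff]; constructor <;> linarith)
    rw [max_lt_iff] at hq1
    refine ⟨q, ⟨q, ⟨?_, ?_⟩, rfl⟩, ?_⟩
    · exact_mod_cast hq1.1.le
    · exact_mod_cast (hq2.le.trans ha1)
    · rw [Real.dist_eq, abs_lt]
      constructor <;> linarith
  have hpair : (φ, ψ) ∈ closure (B ×ˢ B) := by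
    rw [closure_prod_eq]; exact ⟨hφ, hψ⟩
  refine map_mem_closure₂ (f := fun (t : ℝ) (w : WeakDual ℝ X × WeakDual ℝ X) =>
    t • w.1 + (1 - t) • w.2) ?_ hmem hpair ?_
  · have h1 : Continuous fun z : ℝ × (WeakDual ℝ X × WeakDual ℝ X) => z.1 • z.2.1 := by
      fun_prop
    have h2 : Continuous fun z : ℝ × (WeakDual ℝ X × WeakDual ℝ X) => (1 - z.1) • z.2.2 := by
      fun_prop
    exact h1.add h2
  · rintro _ ⟨q, ⟨hq0, hq1⟩, rfl⟩ ⟨x, y⟩ ⟨hx, hy⟩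
    have := h.dual_comb x hx y hy q (1 - q) (by
      rw [abs_of_nonneg hq0, abs_of_nonneg (by linarith)]; linarith)
    simpa using this

/-- A functional `f` with `f z ≤ u` whenever `|φ z| ≤ u` on `B` lies in the closure of `B`. -/
theorem GoodPair.mem_closure (h : GoodPair N S B) (f : WeakDual ℝ X)
    (hf : ∀ z u, (∀ φ ∈ B, |φ z| ≤ u) → f z ≤ u) : f ∈ closure B := by
  by_contra hcon
  obtain ⟨z, u, h1, h2⟩ := exists_eval_separating h.convex_closure isClosed_closure hcon
  refine absurd (hf z u fun φ hφ => abs_le.2 ⟨?_, (h1 φ (subset_closure hφ)).le⟩) (by linarith)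
  have := h1 _ (subset_closure (h.neg_mem hφ))
  have h3 : (-φ : WeakDual ℝ X) z = - φ z := rfl
  linarith

theorem GoodPair.le_of_mem_range (hN : IsEquivNorm N) (h : GoodPair N S B) {y : X}
    (hy : y ∈ closure S) {u : ℝ} (hu : ∀ φ ∈ B, φ y ≤ u) : N y ≤ u := by
  obtain ⟨C, hC, hb⟩ := hN.exists_bound
  refine le_of_forall_pos_le_add fun ε hε => ?_
  obtain ⟨x, hx, hxy⟩ := Metric.mem_closure_iff.1 hy (ε / (2 * C)) (by positivity)
  obtain ⟨φ, hφ, hφx⟩ := h.norming x hx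
  have h1 : N (y - x) ≤ ε / 2 := (hb _).trans (by
    rw [dist_eq_norm] at hxy
    calc C * ‖y - x‖ ≤ C * (ε / (2 * C)) := by gcongr
      _ = ε / 2 := by field_simp)
  have h2 : N y ≤ N (y - x) + N x := by
    have := hN.2.1 (y - x) x
    rwa [sub_add_cancel] at this
  have h3 : φ (x - y) ≤ N (y - x) := by
    have := (abs_le.1 (h.dual_sub hφ (x - y))).2
    rwa [← hN.neg, neg_sub] at this
  rw [map_sub] at h3
  linarith [hu φ hφ]

theorem GoodPair.le_add_ker (hN : IsEquivNorm N) (h : GoodPair N S B) {y z : X}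
    (hy : y ∈ h.range) (hz : z ∈ h.ker) : N y ≤ N (y + z) := by
  refine h.le_of_mem_range hN hy fun φ hφ => ?_
  have := (abs_le.1 (h.dual_sub hφ (y + z))).2
  rwa [map_add, hz φ hφ, add_zero] at this

/-- Every `x` is, uniformly on `B`, approximable by elements of the closure of `S`. If the
distance were positive, Hahn-Banach would give a nonzero element of the closure of `B` vanishing
on `S`. -/
theorem GoodPair.exists_approx (hN : IsEquivNorm N) (h : GoodPair N S B) (x : X) {ε : ℝ}
    (hε : 0 < ε) : ∃ y ∈ h.range, ∀ φ ∈ B, |φ (x - y)| ≤ ε := by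
  let A : X → Set ℝ := fun x => {c | ∃ y ∈ h.range, ∀ φ ∈ B, |φ (x - y)| ≤ c}
  have hbdd : ∀ x, BddBelow (A x) := fun x => ⟨0, by
    rintro c ⟨y, -, hy⟩
    exact (abs_nonneg _).trans (hy 0 h.dual_zero)⟩
  have hN_mem : ∀ x, N x ∈ A x := fun x =>
    ⟨0, h.range.zero_mem, fun φ hφ => by rw [sub_zero]; exact h.dual_sub hφ x⟩
  have hne : ∀ x, (A x).Nonempty := fun x => ⟨_, hN_mem x⟩
  let q : X → ℝ := fun x => sInf (A x)
  have q_le : ∀ x c, c ∈ A x → q x ≤ c := fun x c hc => csInf_le (hbdd x) hc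
  have q_smul_le : ∀ c : ℝ, 0 < c → ∀ x, q (c • x) ≤ c * q x := by
    intro c hc x
    rw [← div_le_iff₀' hc]
    refine le_csInf (hne x) ?_
    rintro d ⟨y, hy, hd⟩
    rw [div_le_iff₀' hc]
    refine q_le _ _ ⟨c • y, h.range.smul_mem c hy, fun φ hφ => ?_⟩
    rw [← smul_sub, map_smul, smul_eq_mul, abs_mul, abs_of_pos hc]
    exact mul_le_mul_of_nonneg_left (hd φ hφ) hc.le
  have q_hom : ∀ c : ℝ, 0 < c → ∀ x, q (c • x) = c * q x := by
    intro c hc x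
    refine le_antisymm (q_smul_le c hc x) ?_
    have := q_smul_le c⁻¹ (inv_pos.2 hc) (c • x)
    rw [inv_smul_smul₀ hc.ne'] at this
    calc c * q x ≤ c * (c⁻¹ * q (c • x)) := by gcongr
      _ = q (c • x) := by field_simp
  have q_add : ∀ x y, q (x + y) ≤ q x + q y := by
    intro x y
    refine le_of_forall_pos_le_add fun δ hδ => ?_
    obtain ⟨c, ⟨x', hx', hc⟩, hc'⟩ := exists_lt_of_csInf_lt (hne x)
      (show q x < q x + δ / 2 by linarith)
    obtain ⟨d, ⟨y', hy', hd⟩, hd'⟩ := exists_lt_of_csInf_lt (hne y)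
      (show q y < q y + δ / 2 by linarith)
    refine (q_le (x + y) (c + d) ⟨x' + y', h.range.add_mem hx' hy', fun φ hφ => ?_⟩).trans
      (by linarith)
    rw [add_sub_add_comm, map_add]
    exact (abs_add_le _ _).trans (add_le_add (hc φ hφ) (hd φ hφ))
  obtain ⟨φ, -, hφx, hφ⟩ := exists_support hN q q_hom q_add (fun x => q_le _ _ (hN_mem x)) x
  have hφ0 : φ = 0 := by
    refine h.sep φ (h.mem_closure φ fun z u hu => ?_) fun y hy => ?_
    · exact (hφ z).trans (q_le _ _ ⟨0, h.range.zero_mem, fun ψ hψ => by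
        rw [sub_zero]; exact hu ψ hψ⟩)
    · have hyr : y ∈ h.range := subset_closure hy
      have h1 : φ y ≤ 0 := (hφ y).trans (q_le _ _ ⟨y, hyr, by simp⟩)
      have h2 : φ (-y) ≤ 0 := (hφ (-y)).trans (q_le _ _ ⟨-y, h.range.neg_mem hyr, by simp⟩)
      rw [map_neg] at h2
      linarith
  have hqx : q x = 0 := by rw [← hφx, hφ0]; rfl
  obtain ⟨c, ⟨y, hy, hc⟩, hc'⟩ := exists_lt_of_csInf_lt (hne x) (show q x < ε by rw [hqx]; exact hε)
  exact ⟨y, hy, fun ψ hψ => (hc ψ hψ).trans hc'.le⟩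

/-- The closure of `S` and the annihilator of `B` are complementary, by completeness and
`GoodPair.exists_approx`. -/
theorem GoodPair.isCompl [CompleteSpace X] (hN : IsEquivNorm N) (h : GoodPair N S B) :
    IsCompl h.range h.ker := by
  obtain ⟨c, C, hc, hcC⟩ := hN.2.2
  constructor
  · rw [Submodule.disjoint_def]
    intro x hx hx'
    have h1 := h.le_add_ker hN hx (h.ker.neg_mem hx')
    rw [add_neg_cancel] at h1
    have h2 : N 0 = 0 := by simpa using hN.1 0 0
    have h3 := (hcC x).1
    have : ‖x‖ ≤ 0 := by
      by_contra! hcon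
      have := mul_pos hc hcon
      linarith
    exact norm_le_zero_iff.1 this
  · rw [codisjoint_iff, eq_top_iff]
    intro x _
    choose y hy hyB using fun n : ℕ => h.exists_approx hN x (ε := 1 / ((n : ℝ) + 1)) (by positivity)
    -- On the closure of `S` the supremum over `B` is `N`, so the approximations are Cauchy.
    have hcau : CauchySeq y := by
      refine Metric.cauchySeq_iff'.2 fun ε hε => ?_
      obtain ⟨n, hn⟩ := exists_nat_one_div_lt (show 0 < c * ε / 2 by positivity)
      refine ⟨n, fun m hm => ?_⟩
      have h1 : N (y m - y n) ≤ 1 / ((m : ℝ) + 1) + 1 / ((n : ℝ) + 1) := by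
        refine h.le_of_mem_range hN (h.range.sub_mem (hy m) (hy n)) fun φ hφ => ?_
        have e : y m - y n = (x - y n) - (x - y m) := by abel
        rw [e, map_sub]
        have a1 := abs_le.1 (hyB m φ hφ)
        have a2 := abs_le.1 (hyB n φ hφ)
        linarith [a1.1, a2.2]
      have h2 : 1 / ((m : ℝ) + 1) ≤ 1 / ((n : ℝ) + 1) := by
        have : (n : ℝ) ≤ m := by exact_mod_cast hm
        gcongr
      have h3 := (hcC (y m - y n)).1
      rw [dist_eq_norm]
      have : c * ‖y m - y n‖ < c * ε := by linarith
      exact lt_of_mul_lt_mul_left this hc.le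
    obtain ⟨y₀, hy₀⟩ := cauchySeq_tendsto_of_complete hcau
    have hy₀r : y₀ ∈ h.range :=
      isClosed_closure.mem_of_tendsto hy₀ (Eventually.of_forall hy)
    have hker : x - y₀ ∈ h.ker := by
      intro φ hφ
      have h1 : Tendsto (fun n => |φ (x - y n)|) atTop (𝓝 |φ (x - y₀)|) := by
        have : Continuous fun z : X => |φ (x - z)| :=
          ((map_continuous φ).comp (continuous_const.sub continuous_id)).abs
        exact (this.tendsto y₀).comp hy₀
      have h2 : |φ (x - y₀)| ≤ 0 := le_of_tendsto_of_tendsto' h1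
        tendsto_one_div_add_atTop_nhds_zero_nat fun n => hyB n φ hφ
      exact abs_nonpos_iff.1 h2
    rw [← add_sub_cancel y₀ x]
    exact Submodule.add_mem_sup hy₀r hker

theorem GoodPair.exists_proj [CompleteSpace X] (hN : IsEquivNorm N) (h : GoodPair N S B) :
    ∃ P : X →L[ℝ] X, (∀ x, P x ∈ closure S) ∧ (∀ x ∈ closure S, P x = x) ∧
      (∀ x, ∀ φ ∈ B, φ (x - P x) = 0) ∧ (∀ x, (∀ φ ∈ B, φ x = 0) → P x = 0) ∧
      ∀ x, N (P x) ≤ N x := by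
  obtain ⟨c, C, hc, hcC⟩ := hN.2.2
  have hcompl := h.isCompl hN
  let P₀ : X →ₗ[ℝ] X := h.range.subtype ∘ₗ Submodule.projectionOnto h.range h.ker hcompl
  have hmem : ∀ x, P₀ x ∈ h.range := fun x => (Submodule.projectionOnto _ _ hcompl x).2
  have hfix : ∀ x ∈ h.range, P₀ x = x := fun x hx => by
    have := Submodule.projectionOnto_apply_left hcompl ⟨x, hx⟩
    exact congrArg Subtype.val this
  have hker : ∀ x ∈ h.ker, P₀ x = 0 := fun x hx => by
    have := (Submodule.projectionOnto_apply_eq_zero_iff hcompl).2 hx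
    exact congrArg Subtype.val this
  have hsub : ∀ x, x - P₀ x ∈ h.ker := fun x => by
    rw [← Submodule.projectionOnto_apply_eq_zero_iff hcompl]
    apply Subtype.ext
    change P₀ (x - P₀ x) = 0
    rw [map_sub, hfix _ (hmem x), sub_self]
  have hle : ∀ x, N (P₀ x) ≤ N x := fun x => by
    have := h.le_add_ker hN (hmem x) (hsub x)
    rwa [add_sub_cancel] at this
  refine ⟨P₀.mkContinuous (C / c) fun x => ?_, hmem, hfix, hsub, hker, hle⟩
  rw [div_mul_eq_mul_div, le_div_iff₀' hc]
  exact (hcC _).1.trans ((hle x).trans (hcC x).2)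

end Proj

/-! ### Sets closed under countably-valued operations -/

section Hull

variable {E : Type u}

/-- `M` contains `e₀` and is closed under the set-valued binary operation `op`. -/
structure OpClosed (op : E → E → Set E) (e₀ : E) (M : Set E) : Prop where
  base : e₀ ∈ M
  op_sub : ∀ a ∈ M, ∀ b ∈ M, op a b ⊆ M

/-- The smallest set containing `A` and `e₀` that is closed under `op`. -/
def opHull (op : E → E → Set E) (e₀ : E) (A : Set E) : Set E :=
  ⋂₀ {M | OpClosed op e₀ M ∧ A ⊆ M}

variable {op : E → E → Set E} {e₀ : E}

theorem opClosed_opHull (A : Set E) : OpClosed op e₀ (opHull op e₀ A) :=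
  ⟨fun _ hM => hM.1.base, fun a ha b hb _ hc M hM =>
    hM.1.op_sub a (ha M hM) b (hb M hM) hc⟩

theorem subset_opHull (A : Set E) : A ⊆ opHull op e₀ A := fun _ ha _ hM => hM.2 ha

theorem opHull_subset {A M : Set E} (hM : OpClosed op e₀ M) (h : A ⊆ M) : opHull op e₀ A ⊆ M :=
  fun _ ha => ha M ⟨hM, h⟩

theorem opHull_mono {A B : Set E} (h : A ⊆ B) : opHull op e₀ A ⊆ opHull op e₀ B :=
  opHull_subset (opClosed_opHull B) (h.trans (subset_opHull B))

theorem OpClosed.iUnion {ι : Type v} [Nonempty ι] {M : ι → Set E}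
    (h : ∀ i, OpClosed op e₀ (M i)) (hd : ∀ i j, ∃ k, M i ⊆ M k ∧ M j ⊆ M k) :
    OpClosed op e₀ (⋃ i, M i) := by
  refine ⟨mem_iUnion.2 ⟨Classical.arbitrary ι, (h _).base⟩, ?_⟩
  intro a ha b hb
  obtain ⟨i, hi⟩ := mem_iUnion.1 ha
  obtain ⟨j, hj⟩ := mem_iUnion.1 hb
  obtain ⟨k, h1, h2⟩ := hd i j
  exact ((h k).op_sub a (h1 hi) b (h2 hj)).trans (subset_iUnion M k)

/-- The stages of the construction of the hull from below. -/
def hullStage (op : E → E → Set E) (A : Set E) : ℕ → Set E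
  | 0 => A
  | n + 1 => hullStage op A n ∪ ⋃ p : hullStage op A n × hullStage op A n, op p.1 p.2

theorem opHull_subset_stages (A : Set E) :
    opHull op e₀ A ⊆ ⋃ n, hullStage op (insert e₀ A) n := by
  have hmono : Monotone (hullStage op (insert e₀ A)) :=
    monotone_nat_of_le_succ fun n => subset_union_left
  refine opHull_subset ⟨mem_iUnion.2 ⟨0, mem_insert _ _⟩, ?_⟩
    ((subset_insert e₀ A).trans (subset_iUnion (hullStage op (insert e₀ A)) 0))
  intro a ha b hb c hc
  obtain ⟨i, hi⟩ := mem_iUnion.1 ha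
  obtain ⟨j, hj⟩ := mem_iUnion.1 hb
  refine mem_iUnion.2 ⟨max i j + 1, Or.inr (mem_iUnion.2 ⟨⟨⟨a, ?_⟩, ⟨b, ?_⟩⟩, hc⟩)⟩
  · exact hmono (le_max_left i j) hi
  · exact hmono (le_max_right i j) hj

open Cardinal in
theorem mk_opHull_le (hop : ∀ a b, (op a b).Countable) (A : Set E) :
    #(opHull op e₀ A) ≤ max ℵ₀ #A := by
  have hst : ∀ n, #(hullStage op (insert e₀ A) n) ≤ max ℵ₀ #A := by
    intro n
    induction n with
    | zero =>
      refine (mk_insert_le).trans (add_le_of_le (le_max_left _ _) (le_max_right _ _) ?_)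
      exact one_le_aleph0.trans (le_max_left _ _)
    | succ n ih =>
      refine (mk_union_le _ _).trans (add_le_of_le (le_max_left _ _) ih ?_)
      refine (mk_iUnion_le _).trans (mul_le_of_le (le_max_left _ _) ?_ ?_)
      · rw [mk_prod, lift_id]
        exact mul_le_of_le (le_max_left _ _) ih ih
      · exact ciSup_le' fun p => (le_aleph0_iff_set_countable.2 (hop _ _)).trans (le_max_left _ _)
  refine (mk_le_mk_of_subset (opHull_subset_stages A)).trans ?_
  have h := mk_iUnion_le_lift (fun n => hullStage op (insert e₀ A) n)
  simp only [lift_uzero, mk_nat, lift_aleph0] at h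
  refine h.trans (mul_le_of_le (le_max_left _ _) (le_max_left _ _) (ciSup_le' hst))

theorem opHull_countable (hop : ∀ a b, (op a b).Countable) {A : Set E} (hA : A.Countable) :
    (opHull op e₀ A).Countable := by
  rw [← Cardinal.le_aleph0_iff_set_countable] at hA ⊢
  exact (mk_opHull_le hop A).trans (max_le le_rfl hA)

end Hull

/-! ### Systems of projections -/

section System

variable {X : Type u} [NormedAddCommGroup X] [NormedSpace ℝ X] {ι : Type u}

/-- The universe in which the closing-off arguments take place: vectors, functionals and additional
indices. -/
abbrev SysObj (X : Type u) [NormedAddCommGroup X] [NormedSpace ℝ X] (ι : Type u) : Type u :=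
  X ⊕ (WeakDual ℝ X ⊕ ι)

/-- The operations making the traces of a closed set on `X` and `X*` stable under rational
combinations and the former normed by the latter; `ν x` is a norming functional of `x`. -/
def baseOp (ν : X → WeakDual ℝ X) : SysObj X ι → SysObj X ι → Set (SysObj X ι)
  | .inl x, .inl y => insert (.inl 0) (insert (.inr (.inl (ν x)))
      (range fun p : ℚ × ℚ => .inl ((p.1 : ℝ) • x + (p.2 : ℝ) • y)))
  | .inr (.inl φ), .inr (.inl ψ) => insert (.inl 0)
      (range fun p : ℚ × ℚ => .inr (.inl ((p.1 : ℝ) • φ + (p.2 : ℝ) • ψ)))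
  | _, _ => {.inl 0}

theorem baseOp_countable (ν : X → WeakDual ℝ X) (a b : SysObj X ι) :
    (baseOp ν a b).Countable := by
  rcases a with x | φ | i <;> rcases b with y | ψ | j <;>
    first
    | exact countable_singleton _
    | exact ((countable_range _).insert _).insert _
    | exact (countable_range _).insert _

/-- The vectors belonging to `M`. -/
def sysX (M : Set (SysObj X ι)) : Set X := {x | .inl x ∈ M}

/-- The functionals of the dual ball belonging to `M`. -/
def sysB (N : X → ℝ) (M : Set (SysObj X ι)) : Set (WeakDual ℝ X) :=
  {φ | φ ∈ dualBallWrt N ∧ .inr (.inl φ) ∈ M}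

/-- Closing-off operations on vectors, functionals and additional indices such that every closed
set `M` yields a norm-one projection onto the closed span of the vectors in `M`. -/
structure ProjSystem (N : X → ℝ) (ι : Type u) where
  hN : IsEquivNorm N
  ν : X → WeakDual ℝ X
  ν_mem : ∀ x, ν x ∈ dualBallWrt N
  ν_eq : ∀ x, ν x x = N x
  ex : SysObj X ι → SysObj X ι → Set (SysObj X ι)
  ex_countable : ∀ a b, (ex a b).Countable
  sep : ∀ M, OpClosed (fun a b => baseOp ν a b ∪ ex a b) (.inr (.inl 0)) M →
    ∀ φ ∈ closure (sysB N M), (∀ x ∈ sysX M, φ x = 0) → φ = 0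

namespace ProjSystem

variable {N : X → ℝ} (𝔖 : ProjSystem N ι)

/-- All the operations of the system. -/
def op (a b : SysObj X ι) : Set (SysObj X ι) := baseOp 𝔖.ν a b ∪ 𝔖.ex a b

/-- Sets closed under the operations of the system. -/
def Closed (M : Set (SysObj X ι)) : Prop := OpClosed 𝔖.op (.inr (.inl 0)) M

/-- The smallest closed set containing `A`. -/
def hull (A : Set (SysObj X ι)) : Set (SysObj X ι) := opHull 𝔖.op (.inr (.inl 0)) A

theorem op_countable (a b : SysObj X ι) : (𝔖.op a b).Countable :=
  (baseOp_countable _ a b).union (𝔖.ex_countable a b)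

variable {𝔖} {M M' : Set (SysObj X ι)}

theorem Closed.ex_sub (h : 𝔖.Closed M) {a b : SysObj X ι} (ha : a ∈ M) (hb : b ∈ M) :
    𝔖.ex a b ⊆ M := subset_union_right.trans (h.op_sub a ha b hb)

theorem Closed.base_sub (h : 𝔖.Closed M) {a b : SysObj X ι} (ha : a ∈ M) (hb : b ∈ M) :
    baseOp 𝔖.ν a b ⊆ M := subset_union_left.trans (h.op_sub a ha b hb)

theorem Closed.goodPair (h : 𝔖.Closed M) : GoodPair N (sysX M) (sysB N M) where
  zero_mem := h.base_sub h.base h.base (mem_insert _ _)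
  comb_mem x hx y hy q r :=
    h.base_sub (a := .inl x) (b := .inl y) hx hy (Or.inr (Or.inr ⟨(q, r), rfl⟩))
  dual_sub := fun φ hφ => hφ.1
  dual_zero := ⟨fun x => (abs_zero (α := ℝ)).trans_le (𝔖.hN.nonneg x), h.base⟩
  dual_comb φ hφ ψ hψ q r hqr := by
    refine ⟨fun x => ?_, h.base_sub (a := .inr (.inl φ)) (b := .inr (.inl ψ)) hφ.2 hψ.2
      (Or.inr ⟨(q, r), rfl⟩)⟩
    have hqr' : |(q : ℝ)| + |(r : ℝ)| ≤ 1 := by exact_mod_cast hqr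
    have h1 := hφ.1 x
    have h2 := hψ.1 x
    have h3 := 𝔖.hN.nonneg x
    have : ((q : ℝ) • φ + (r : ℝ) • ψ) x = q * φ x + r * ψ x := rfl
    rw [this]
    calc |(q : ℝ) * φ x + r * ψ x| ≤ |(q : ℝ)| * |φ x| + |(r : ℝ)| * |ψ x| := by
          rw [← abs_mul, ← abs_mul]; exact abs_add_le _ _
      _ ≤ |(q : ℝ)| * N x + |(r : ℝ)| * N x := by gcongr
      _ = (|(q : ℝ)| + |(r : ℝ)|) * N x := by ring
      _ ≤ N x := by nlinarith
  norming x hx := ⟨𝔖.ν x, ⟨𝔖.ν_mem x, h.base_sub (a := .inl x) (b := .inl x) hx hx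
    (Or.inr (Or.inl rfl))⟩, 𝔖.ν_eq x⟩
  sep := 𝔖.sep M h

theorem sysX_mono (h : M ⊆ M') : sysX M ⊆ sysX M' := fun _ hx => h hx

theorem sysB_mono (h : M ⊆ M') : sysB N M ⊆ sysB N M' := fun _ hx => ⟨hx.1, h hx.2⟩

variable [CompleteSpace X]

/-- The projection generated by a closed set. -/
noncomputable def Closed.proj (h : 𝔖.Closed M) : X →L[ℝ] X :=
  (h.goodPair.exists_proj 𝔖.hN).choose

theorem Closed.proj_mem (h : 𝔖.Closed M) (x : X) : h.proj x ∈ closure (sysX M) :=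
  (h.goodPair.exists_proj 𝔖.hN).choose_spec.1 x

theorem Closed.proj_eq (h : 𝔖.Closed M) {x : X} (hx : x ∈ closure (sysX M)) : h.proj x = x :=
  (h.goodPair.exists_proj 𝔖.hN).choose_spec.2.1 x hx

theorem Closed.proj_dual (h : 𝔖.Closed M) (x : X) {φ : WeakDual ℝ X} (hφ : φ ∈ sysB N M) :
    φ (h.proj x) = φ x := by
  have := (h.goodPair.exists_proj 𝔖.hN).choose_spec.2.2.1 x φ hφ
  rw [map_sub] at this
  exact (sub_eq_zero.1 this).symm

theorem Closed.proj_ker (h : 𝔖.Closed M) {x : X} (hx : ∀ φ ∈ sysB N M, φ x = 0) :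
    h.proj x = 0 :=
  (h.goodPair.exists_proj 𝔖.hN).choose_spec.2.2.2.1 x hx

theorem Closed.proj_le (h : 𝔖.Closed M) (x : X) : N (h.proj x) ≤ N x :=
  (h.goodPair.exists_proj 𝔖.hN).choose_spec.2.2.2.2 x

theorem Closed.range_proj (h : 𝔖.Closed M) : Set.range h.proj = closure (sysX M) := by
  ext x
  exact ⟨by rintro ⟨y, rfl⟩; exact h.proj_mem y, fun hx => ⟨x, h.proj_eq hx⟩⟩

theorem Closed.proj_dual_closure (h : 𝔖.Closed M) (x : X) {φ : WeakDual ℝ X}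
    (hφ : φ ∈ closure (sysB N M)) : φ (h.proj x) = φ x := by
  have hc : IsClosed {ψ : WeakDual ℝ X | ψ (h.proj x) = ψ x} :=
    isClosed_eq (WeakDual.eval_continuous _) (WeakDual.eval_continuous _)
  exact closure_minimal (fun ψ hψ => h.proj_dual x hψ) hc hφ

theorem Closed.proj_outer (h : 𝔖.Closed M) (h' : 𝔖.Closed M') (hM : M ⊆ M') (x : X) :
    h'.proj (h.proj x) = h.proj x :=
  h'.proj_eq (closure_mono (sysX_mono hM) (h.proj_mem x))

theorem Closed.proj_inner (h : 𝔖.Closed M) (h' : 𝔖.Closed M') (hM : M ⊆ M') (x : X) :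
    h.proj (h'.proj x) = h.proj x := by
  refine sub_eq_zero.1 ?_
  rw [← map_sub]
  refine h.proj_ker fun φ hφ => ?_
  rw [map_sub, h'.proj_dual x (sysB_mono hM hφ), sub_self]

/-- The adjoint of the projection maps the dual ball into the weak* closure of the functionals
in `M`. -/
theorem Closed.comp_mem_closure (h : 𝔖.Closed M) {φ ψ : WeakDual ℝ X} (hφ : φ ∈ dualBallWrt N)
    (hψ : ∀ x, ψ x = φ (h.proj x)) : ψ ∈ closure (sysB N M) := by
  refine h.goodPair.mem_closure ψ fun z u hu => ?_
  rw [hψ]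
  refine ((le_abs_self _).trans (hφ _)).trans ?_
  refine h.goodPair.le_of_mem_range 𝔖.hN (h.proj_mem z) fun χ hχ => ?_
  rw [h.proj_dual z hχ]
  exact (le_abs_self _).trans (hu χ hχ)

end ProjSystem

end System

/-! ### Corson dual balls yield projectional skeletons -/

section CorsonToProj

variable {X : Type u} [NormedAddCommGroup X] [NormedSpace ℝ X]

/-- Any equivalent dual ball embeds into a `Σ`-product as soon as the original one does: shrink it
into the original ball. -/
theorem exists_sigma_embedding (hX : IsCorsonCompact (dualBall X)) {N : X → ℝ}
    (hN : IsEquivNorm N) : ∃ (Γ : Type u) (h : dualBallWrt N → Γ → ℝ), Continuous h ∧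
      Function.Injective h ∧ ∀ φ, {γ | h φ γ ≠ 0}.Countable := by
  obtain ⟨Γ, A, -, hA, ⟨e⟩⟩ := hX
  obtain ⟨C, hC, hb⟩ := hN.exists_bound
  have hmem : ∀ φ : dualBallWrt N, C⁻¹ • (φ : WeakDual ℝ X) ∈ dualBall X := by
    intro φ x
    have h1 := (φ.2 x).trans (hb x)
    have : (C⁻¹ • (φ : WeakDual ℝ X)) x = C⁻¹ * (φ : WeakDual ℝ X) x := rfl
    rw [this, abs_mul, abs_of_pos (inv_pos.2 hC), inv_mul_le_iff₀ hC]
    exact h1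
  have hcont : Continuous fun φ : dualBallWrt N => C⁻¹ • (φ : WeakDual ℝ X) :=
    (continuous_const_smul (C⁻¹ : ℝ)).comp continuous_subtype_val
  refine ⟨Γ, fun φ => e ⟨_, hmem φ⟩, ?_, ?_, fun φ => hA _ (e _).2⟩
  · exact continuous_subtype_val.comp (e.continuous.comp (hcont.subtype_mk _))
  · intro φ ψ h
    have h1 := congrArg Subtype.val (e.injective (Subtype.ext h))
    exact Subtype.ext (smul_right_injective _ (inv_ne_zero hC.ne') h1)

/-- A `Σ`-embedding of the dual ball provides the closing-off operations: coordinates supported by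
some functional in the closed set are determined by vectors in it, the others vanish. -/
theorem exists_system_of_corson (hX : IsCorsonCompact (dualBall X)) {N : X → ℝ}
    (hN : IsEquivNorm N) : Nonempty (ProjSystem N PUnit.{u + 1}) := by
  obtain ⟨Γ, h, hcont, hinj, hsupp⟩ := exists_sigma_embedding hX hN
  have hS : ∀ γ, ∃ S : Set X, S.Countable ∧ ∀ φ ψ : dualBallWrt N,
      (∀ x ∈ S, (φ : WeakDual ℝ X) x = (ψ : WeakDual ℝ X) x) → h φ γ = h ψ γ := fun γ =>
    exists_countable_determining hN (fun φ => h φ γ) ((continuous_apply γ).comp hcont)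
  choose S hSc hS using hS
  choose ν hν1 hν2 using exists_norming hN
  -- A functional in the system brings along vectors determining the coordinates in its support.
  let ex : SysObj X PUnit.{u + 1} → SysObj X PUnit.{u + 1} → Set (SysObj X PUnit.{u + 1}) :=
    fun a _ => match a with
      | .inr (.inl φ) => Sum.inl '' ⋃ hφ : φ ∈ dualBallWrt N, ⋃ γ ∈ {γ | h ⟨φ, hφ⟩ γ ≠ 0}, S γ
      | _ => ∅
  refine ⟨⟨hN, ν, hν1, hν2, ex, ?_, ?_⟩⟩
  · rintro (x | φ | i) b
    · exact countable_empty
    · exact (countable_iUnion fun hφ => (hsupp _).biUnion fun γ _ => hSc γ).image _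
    · exact countable_empty
  · intro M hM φ hφ h0
    have hclosed : closure (sysB N M) ⊆ dualBallWrt N :=
      closure_minimal (fun ψ hψ => hψ.1) (isCompact_dualBallWrt hN).isClosed
    have hzero : (0 : WeakDual ℝ X) ∈ dualBallWrt N :=
      fun x => (abs_zero (α := ℝ)).trans_le (hN.nonneg x)
    have key : (⟨φ, hclosed hφ⟩ : dualBallWrt N) = ⟨0, hzero⟩ := by
      refine hinj (funext fun γ => ?_)
      by_cases hγ : ∃ ψ, ∃ hψ : ψ ∈ sysB N M, h ⟨ψ, hψ.1⟩ γ ≠ 0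
      · obtain ⟨ψ, hψ, hne⟩ := hγ
        refine hS γ _ _ fun x hx => ?_
        refine h0 x ?_
        refine hM.op_sub (.inr (.inl ψ)) hψ.2 (.inr (.inl ψ)) hψ.2 (Or.inr ?_)
        refine ⟨x, ?_, rfl⟩
        simp only [mem_iUnion]
        exact ⟨hψ.1, γ, hne, hx⟩
      · push Not at hγ
        rw [hγ 0 ⟨hzero, hM.base⟩]
        have hφ' : (⟨φ, hclosed hφ⟩ : dualBallWrt N) ∈
            closure ((↑) ⁻¹' sysB N M : Set (dualBallWrt N)) := by
          rw [closure_subtype, image_preimage_eq_inter_range, Subtype.range_val,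
            inter_eq_left.2 fun ψ (hψ : ψ ∈ sysB N M) => hψ.1]
          exact hφ
        have hc : IsClosed {ψ : dualBallWrt N | h ψ γ = 0} :=
          isClosed_eq ((continuous_apply γ).comp hcont) continuous_const
        have hsub : ((↑) ⁻¹' sysB N M : Set (dualBallWrt N)) ⊆ {ψ | h ψ γ = 0} :=
          fun ψ hψ => hγ ψ hψ
        exact closure_minimal hsub hc hφ'
    exact congrArg Subtype.val key

theorem has1ProjectionalSkeletonWrt_of_corson [CompleteSpace X] (hX : IsCorsonCompact (dualBall X))
    {N : X → ℝ} (hN : IsEquivNorm N) : Has1ProjectionalSkeletonWrt N := by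
  obtain ⟨𝔖⟩ := exists_system_of_corson hX hN
  have hne : Nonempty {M : Set (SysObj X PUnit.{u + 1}) // M.Countable ∧ 𝔖.Closed M} :=
    ⟨⟨𝔖.hull ∅, opHull_countable 𝔖.op_countable countable_empty, opClosed_opHull _⟩⟩
  refine ⟨{
    Γ := {M : Set (SysObj X PUnit.{u + 1}) // M.Countable ∧ 𝔖.Closed M}
    directed := ?_
    P := fun M => M.2.2.proj
    idem := fun M x => M.2.2.proj_eq (M.2.2.proj_mem x)
    separable := ?_
    covers := ?_
    comp_eq_of_le := fun M M' h x =>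
      ⟨M.2.2.proj_inner M'.2.2 h x, M.2.2.proj_outer M'.2.2 h x⟩
    sup_seq := ?_ }, fun M x => M.2.2.proj_le x⟩
  · intro M M'
    refine ⟨⟨𝔖.hull (M ∪ M'), opHull_countable 𝔖.op_countable (M.2.1.union M'.2.1),
      opClosed_opHull _⟩, ?_, ?_⟩
    · exact subset_union_left.trans (subset_opHull _)
    · exact subset_union_right.trans (subset_opHull _)
  · intro M
    rw [M.2.2.range_proj]
    exact (M.2.1.preimage Sum.inl_injective).isSeparable.closure
  · intro x
    refine ⟨⟨𝔖.hull {.inl x}, opHull_countable 𝔖.op_countable (countable_singleton _),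
      opClosed_opHull _⟩, ?_⟩
    rw [ProjSystem.Closed.range_proj]
    exact subset_closure (subset_opHull _ rfl)
  · intro f hf
    have hcl : 𝔖.Closed (⋃ n, (f n).1) := OpClosed.iUnion (fun n => (f n).2.2) fun i j =>
      ⟨max i j, hf.monotone (le_max_left i j), hf.monotone (le_max_right i j)⟩
    refine ⟨⟨⋃ n, (f n).1, countable_iUnion fun n => (f n).2.1, hcl⟩, ⟨?_, ?_⟩, ?_⟩
    · rintro _ ⟨n, rfl⟩
      exact subset_iUnion (fun n => (f n).1) n
    · intro M hM
      exact iUnion_subset fun n => hM ⟨n, rfl⟩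
    · simp only [ProjSystem.Closed.range_proj]
      have : sysX (⋃ n, (f n).1) = ⋃ n, sysX (f n).1 := by
        ext x; simp [sysX]
      rw [this]
      refine (closure_mono (iUnion_mono fun n => subset_closure)).antisymm ?_
      exact closure_minimal (iUnion_subset fun n => closure_mono (subset_iUnion
        (fun n => sysX (f n).1) n)) isClosed_closure

end CorsonToProj

/-! ### Projectional skeletons yield retractional skeletons of dual balls -/

section ProjToRetr

variable {X : Type u} [NormedAddCommGroup X] [NormedSpace ℝ X]

/-- The adjoint of a projection of `N`-norm at most one, on the dual ball. -/
noncomputable def adjointOnBall {N : X → ℝ} (P : X →L[ℝ] X) (hP : ∀ x, N (P x) ≤ N x) :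
    C(dualBallWrt N, dualBallWrt N) where
  toFun φ := ⟨StrongDual.toWeakDual ((WeakDual.toStrongDual (φ : WeakDual ℝ X)).comp P),
    fun x => (φ.2 (P x)).trans (hP x)⟩
  continuous_toFun := by
    refine Continuous.subtype_mk (WeakDual.continuous_of_continuous_eval fun x => ?_) _
    exact (WeakDual.eval_continuous (P x)).comp continuous_subtype_val

theorem adjointOnBall_apply {N : X → ℝ} (P : X →L[ℝ] X) (hP : ∀ x, N (P x) ≤ N x)
    (φ : dualBallWrt N) (x : X) :
    (adjointOnBall P hP φ : WeakDual ℝ X) x = (φ : WeakDual ℝ X) (P x) := rfl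

theorem dualBallWrt_ext {N : X → ℝ} {φ ψ : dualBallWrt N}
    (h : ∀ x, (φ : WeakDual ℝ X) x = (ψ : WeakDual ℝ X) x) : φ = ψ :=
  Subtype.ext (DFunLike.ext _ _ h)

theorem tendsto_dualBallWrt {N : X → ℝ} {ι : Type*} {l : Filter ι} {g : ι → dualBallWrt N}
    {φ : dualBallWrt N} : Tendsto g l (𝓝 φ) ↔
      ∀ x, Tendsto (fun i => (g i : WeakDual ℝ X) x) l (𝓝 ((φ : WeakDual ℝ X) x)) := by
  rw [tendsto_subtype_rng]
  exact tendsto_iff_forall_eval_tendsto_topDualPairing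

theorem hasRetractionalSkeleton_of_proj {N : X → ℝ} (hN : IsEquivNorm N)
    (h : Has1ProjectionalSkeletonWrt N) : HasRetractionalSkeleton (dualBallWrt N) := by
  obtain ⟨𝔰, hP⟩ := h
  have : CompactSpace (dualBallWrt N) := isCompact_iff_compactSpace.1 (isCompact_dualBallWrt hN)
  let := 𝔰.po
  have := 𝔰.ne
  let r : 𝔰.Γ → C(dualBallWrt N, dualBallWrt N) := fun s => adjointOnBall (𝔰.P s) (hP s)
  have hr : ∀ s φ x, (r s φ : WeakDual ℝ X) x = (φ : WeakDual ℝ X) (𝔰.P s x) :=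
    fun _ _ _ => rfl
  refine ⟨{
    Γ := 𝔰.Γ
    directed := 𝔰.directed
    r := r
    isRetraction := fun s φ => dualBallWrt_ext fun x => by rw [hr, hr, 𝔰.idem, ← hr]
    metrizable := ?_
    tendsto_id := ?_
    comp_eq_of_le := fun s t hst φ =>
      ⟨dualBallWrt_ext fun x => by rw [hr, hr, (𝔰.comp_eq_of_le s t hst x).2, ← hr],
        dualBallWrt_ext fun x => by rw [hr, hr, (𝔰.comp_eq_of_le s t hst x).1, ← hr]⟩
    sup_seq := ?_ }⟩
  · intro s
    obtain ⟨c, hc, hsub⟩ := 𝔰.separable s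
    have := hc.to_subtype
    have : CompactSpace (Set.range (r s)) :=
      isCompact_iff_compactSpace.1 (isCompact_range (r s).continuous)
    let e : Set.range (r s) → c → ℝ := fun φ x => (φ.1 : WeakDual ℝ X) x
    have he : Continuous e := continuous_pi fun x =>
      (WeakDual.eval_continuous (x : X)).comp
        (continuous_subtype_val.comp continuous_subtype_val)
    have hinj : Function.Injective e := by
      rintro ⟨_, φ, rfl⟩ ⟨_, ψ, rfl⟩ heq
      refine Subtype.ext (dualBallWrt_ext fun x => ?_)
      have hcl : IsClosed {y : X | (r s φ : WeakDual ℝ X) y = (r s ψ : WeakDual ℝ X) y} :=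
        isClosed_eq (ContinuousLinearMap.continuous (r s φ : WeakDual ℝ X))
          (ContinuousLinearMap.continuous (r s ψ : WeakDual ℝ X))
      have h1 := closure_minimal (fun y hy => congrFun heq ⟨y, hy⟩) hcl (hsub ⟨x, rfl⟩)
      simpa only [hr, 𝔰.idem, mem_ofPred_eq] using h1
    have : MetrizableSpace (c → ℝ) := metrizableSpace_of_t3_secondCountable _
    exact (he.isClosedEmbedding hinj).isEmbedding.metrizableSpace
  · intro φ
    refine tendsto_dualBallWrt.2 fun x => ?_
    obtain ⟨s, y, rfl⟩ := 𝔰.covers x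
    refine tendsto_const_nhds.congr' ?_
    filter_upwards [eventually_ge_atTop s] with t ht
    rw [hr, (𝔰.comp_eq_of_le s t ht y).2]
  · intro f hf
    obtain ⟨t, ht, hrange⟩ := 𝔰.sup_seq f hf
    refine ⟨t, ht, fun φ => tendsto_dualBallWrt.2 fun x => ?_⟩
    simp only [hr]
    have hcont : Tendsto N (𝓝 0) (𝓝 0) := by
      have := hN.continuous.tendsto 0
      have h0 : N 0 = 0 := by simpa using hN.1 0 0
      rwa [h0] at this
    have hmem : 𝔰.P t x ∈ closure (⋃ n, Set.range (𝔰.P (f n))) := hrange ▸ ⟨x, rfl⟩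
    rw [Metric.tendsto_atTop]
    intro ε hε
    have hev : ∀ᶠ y in 𝓝 (𝔰.P t x), N (𝔰.P t x - y) < ε / 2 := by
      have h1 : Tendsto (fun y => 𝔰.P t x - y) (𝓝 (𝔰.P t x)) (𝓝 0) := by
        have : Continuous fun y => 𝔰.P t x - y := by fun_prop
        simpa using this.tendsto (𝔰.P t x)
      exact (hcont.comp h1).eventually (gt_mem_nhds (half_pos hε))
    obtain ⟨y, hy1, hy2⟩ := (mem_closure_iff_frequently.1 hmem).and_eventually hev |>.exists
    obtain ⟨n, z, rfl⟩ := mem_iUnion.1 hy1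
    refine ⟨n, fun m hm => ?_⟩
    have h1 : 𝔰.P (f m) (𝔰.P t x) = 𝔰.P (f m) x := (𝔰.comp_eq_of_le _ _ (ht.1 ⟨m, rfl⟩) x).1
    have h2 : 𝔰.P (f m) (𝔰.P (f n) z) = 𝔰.P (f n) z :=
      (𝔰.comp_eq_of_le _ _ (hf.monotone hm) z).2
    set d := 𝔰.P t x - 𝔰.P (f n) z with hd
    have h3 : 𝔰.P (f m) x - 𝔰.P t x = 𝔰.P (f m) d + -d := by
      rw [hd, map_sub, h1, h2]; abel
    have h4 : N (𝔰.P (f m) x - 𝔰.P t x) < ε := by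
      rw [h3]
      have := hN.2.1 (𝔰.P (f m) d) (-d)
      have h5 := hP (f m) d
      rw [hN.neg] at this
      linarith
    rw [Real.dist_eq, ← map_sub]
    exact (φ.2 _).trans_lt h4

end ProjToRetr

/-! ### General facts on retractional skeletons -/

attribute [instance] RetractionalSkeleton.po RetractionalSkeleton.ne

namespace RetractionalSkeleton

variable {K : Type u} [TopologicalSpace K] (𝔰 : RetractionalSkeleton K)

/-- Weakly increasing sequences also have suprema, with pointwise convergence of the
retractions. -/
theorem sup_mono (f : ℕ → 𝔰.Γ) (hf : Monotone f) : ∃ t : 𝔰.Γ, IsLUB (Set.range f) t ∧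
    ∀ x : K, Tendsto (fun n => 𝔰.r (f n) x) atTop (𝓝 (𝔰.r t x)) := by
  by_cases hconst : ∃ n, ∀ m, n ≤ m → f m = f n
  · obtain ⟨n, hn⟩ := hconst
    refine ⟨f n, ⟨?_, fun b hb => hb ⟨n, rfl⟩⟩, fun x => ?_⟩
    · rintro _ ⟨m, rfl⟩
      rcases le_total m n with h | h
      · exact hf h
      · exact (hn m h).le
    · refine tendsto_const_nhds.congr' ?_
      filter_upwards [eventually_ge_atTop n] with m hm
      rw [hn m hm]
  push Not at hconst
  have hlt : ∀ n, ∃ m, n ≤ m ∧ f n < f m := fun n => by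
    obtain ⟨m, hm, hne⟩ := hconst n
    exact ⟨m, hm, lt_of_le_of_ne (hf hm) hne.symm⟩
  -- Along any subsequence the values of `f` have a strictly increasing subsequence.
  have hsub : ∀ ns : ℕ → ℕ, Tendsto ns atTop atTop → ∃ ms : ℕ → ℕ, ∃ t : 𝔰.Γ,
      IsLUB (Set.range f) t ∧ ∀ x, Tendsto (fun n => 𝔰.r (f (ns (ms n))) x) atTop
        (𝓝 (𝔰.r t x)) := by
    intro ns hns
    have hstep : ∀ a, ∃ b, a < b ∧ f (ns a) < f (ns b) := fun a => by
      obtain ⟨m, -, hm⟩ := hlt (ns a)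
      obtain ⟨b, hb1, hb2⟩ := ((hns.eventually_ge_atTop m).and (eventually_gt_atTop a)).exists
      exact ⟨b, hb2, hm.trans_le (hf hb1)⟩
    choose b hb1 hb2 using hstep
    let ms : ℕ → ℕ := fun n => b^[n] 0
    have hms : ∀ n, ms (n + 1) = b (ms n) := fun n => Function.iterate_succ_apply' b n 0
    have hms1 : StrictMono ms := strictMono_nat_of_lt_succ fun n => by rw [hms]; exact hb1 _
    have hms2 : StrictMono fun n => f (ns (ms n)) :=
      strictMono_nat_of_lt_succ fun n => by rw [hms]; exact hb2 _
    obtain ⟨t, ht, hlim⟩ := 𝔰.sup_seq _ hms2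
    refine ⟨ms, t, ⟨?_, ?_⟩, hlim⟩
    · rintro _ ⟨n, rfl⟩
      obtain ⟨k, hk⟩ := ((hns.comp hms1.tendsto_atTop).eventually_ge_atTop n).exists
      exact (hf hk).trans (ht.1 ⟨k, rfl⟩)
    · exact fun c hc => ht.2 (by rintro _ ⟨n, rfl⟩; exact hc ⟨_, rfl⟩)
  obtain ⟨-, t, ht, -⟩ := hsub id Filter.tendsto_id
  refine ⟨t, ht, fun x => tendsto_of_subseq_tendsto fun ns hns => ?_⟩
  obtain ⟨ms, t', ht', hlim⟩ := hsub ns hns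
  exact ⟨ms, ht.unique ht' ▸ hlim x⟩

theorem exists_mono_above (f : ℕ → 𝔰.Γ) : ∃ g : ℕ → 𝔰.Γ, Monotone g ∧ ∀ n, f n ≤ g n := by
  choose ub h1 h2 using 𝔰.directed
  let g : ℕ → 𝔰.Γ := fun n => Nat.rec (f 0) (fun n s => ub s (f (n + 1))) n
  refine ⟨g, monotone_nat_of_le_succ fun n => h1 _ _, fun n => ?_⟩
  cases n with
  | zero => exact le_rfl
  | succ n => exact h2 _ _

theorem exists_upperBound {ι : Type v} [Countable ι] (f : ι → 𝔰.Γ) : ∃ t, ∀ i, f i ≤ t := by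
  rcases isEmpty_or_nonempty ι with h | h
  · exact ⟨Classical.arbitrary _, fun i => h.elim i⟩
  obtain ⟨e, he⟩ := exists_surjective_nat ι
  obtain ⟨g, hg, hfg⟩ := 𝔰.exists_mono_above fun n => f (e n)
  obtain ⟨t, ht, -⟩ := 𝔰.sup_mono g hg
  refine ⟨t, fun i => ?_⟩
  obtain ⟨n, rfl⟩ := he i
  exact (hfg n).trans (ht.1 ⟨n, rfl⟩)

/-- A real continuous function stabilizes along the net `r s x`, because countable sets of
indices are bounded. -/
theorem eventually_eq (g : K → ℝ) (hg : Continuous g) (x : K) :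
    ∃ s₀, ∀ s, s₀ ≤ s → g (𝔰.r s x) = g x := by
  have h : ∀ n : ℕ, ∃ s₀, ∀ s, s₀ ≤ s → dist (g (𝔰.r s x)) (g x) < 1 / ((n : ℝ) + 1) := by
    intro n
    have hlim : Tendsto (fun s => g (𝔰.r s x)) atTop (𝓝 (g x)) :=
      (hg.tendsto x).comp (𝔰.tendsto_id x)
    have hdir : IsDirectedOrder 𝔰.Γ := ⟨𝔰.directed⟩
    exact eventually_atTop.1 (hlim.eventually (Metric.ball_mem_nhds _ (by positivity)))
  choose s₀ hs₀ using h
  obtain ⟨t, ht⟩ := 𝔰.exists_upperBound s₀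
  refine ⟨t, fun s hs => ?_⟩
  have h0 : dist (g (𝔰.r s x)) (g x) ≤ 0 :=
    ge_of_tendsto' tendsto_one_div_add_atTop_nhds_zero_nat fun n =>
      (hs₀ n s ((ht n).trans hs)).le
  exact dist_le_zero.1 h0

theorem mem_inducedSet {x : K} : x ∈ 𝔰.inducedSet ↔ ∃ s, 𝔰.r s x = x := by
  simp only [inducedSet, mem_iUnion]
  constructor
  · rintro ⟨s, y, rfl⟩
    exact ⟨s, 𝔰.isRetraction s y⟩
  · rintro ⟨s, hs⟩
    exact ⟨s, x, hs⟩

theorem fix_mono {x : K} {s t : 𝔰.Γ} (h : s ≤ t) (hx : 𝔰.r s x = x) : 𝔰.r t x = x := by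
  rw [← hx]
  exact (𝔰.comp_eq_of_le s t h x).2

variable [T2Space K]

theorem exists_fix_of_countable {A : Set K} (hA : A.Countable) (hD : A ⊆ 𝔰.inducedSet) :
    ∃ t, ∀ a ∈ closure A, 𝔰.r t a = a := by
  have := hA.to_subtype
  choose s hs using fun a : A => 𝔰.mem_inducedSet.1 (hD a.2)
  obtain ⟨t, ht⟩ := 𝔰.exists_upperBound s
  refine ⟨t, fun a ha => ?_⟩
  have hc : IsClosed {x | 𝔰.r t x = x} := isClosed_eq (𝔰.r t).continuous continuous_id
  exact closure_minimal (fun x hx => 𝔰.fix_mono (ht ⟨x, hx⟩) (hs ⟨x, hx⟩)) hc ha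

/-- The set induced by a retractional skeleton is countably tight. -/
theorem exists_countable_closure [CompactSpace K] {x : K} (hx : x ∈ 𝔰.inducedSet) {A : Set K}
    (hA : A ⊆ 𝔰.inducedSet) (hxA : x ∈ closure A) :
    ∃ A' ⊆ A, A'.Countable ∧ x ∈ closure A' := by
  -- Metrizability of the range of `r s` gives countable sets working after applying `r s`.
  have hC : ∀ s, ∃ C ⊆ A, C.Countable ∧ 𝔰.r s x ∈ closure (𝔰.r s '' C) := by
    intro s
    have := 𝔰.metrizable s
    let ρ : K → Set.range (𝔰.r s) := fun y => ⟨𝔰.r s y, y, rfl⟩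
    have hρ : Continuous ρ := (𝔰.r s).continuous.subtype_mk _
    have h1 : ρ x ∈ closure (ρ '' A) := mem_closure_image hρ.continuousAt hxA
    obtain ⟨v, hv, hlim⟩ := mem_closure_iff_seq_limit.1 h1
    choose c hc hcv using hv
    refine ⟨Set.range c, by rintro _ ⟨n, rfl⟩; exact hc n, countable_range c, ?_⟩
    refine mem_closure_of_tendsto ((continuous_subtype_val.tendsto _).comp hlim) ?_
    refine Eventually.of_forall fun n => ?_
    exact ⟨c n, ⟨n, rfl⟩, congrArg Subtype.val (hcv n)⟩
  choose C hCA hCc hC using hC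
  have hnext : ∀ s, ∃ t, s ≤ t ∧ ∀ a ∈ C s, 𝔰.r t a = a := by
    intro s
    obtain ⟨t, ht⟩ := 𝔰.exists_fix_of_countable (hCc s) ((hCA s).trans hA)
    obtain ⟨w, h1, h2⟩ := 𝔰.directed s t
    exact ⟨w, h1, fun a ha => 𝔰.fix_mono h2 (ht a (subset_closure ha))⟩
  choose next hn1 hn2 using hnext
  obtain ⟨s₀, hs₀⟩ := 𝔰.mem_inducedSet.1 hx
  let f : ℕ → 𝔰.Γ := fun n => next^[n] s₀
  have hf1 : ∀ n, f (n + 1) = next (f n) := fun n => Function.iterate_succ_apply' next n s₀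
  have hf : Monotone f := monotone_nat_of_le_succ fun n => by rw [hf1]; exact hn1 _
  have hfx : ∀ n, 𝔰.r (f n) x = x := fun n => 𝔰.fix_mono (hf (Nat.zero_le n)) hs₀
  obtain ⟨t, ht, hlim⟩ := 𝔰.sup_mono f hf
  refine ⟨⋃ n, C (f n), iUnion_subset fun n => hCA _, countable_iUnion fun n => hCc _, ?_⟩
  set A' := ⋃ n, C (f n) with hA'
  have hfix : ∀ a ∈ closure A', 𝔰.r t a = a := by
    have hc : IsClosed {x | 𝔰.r t x = x} := isClosed_eq (𝔰.r t).continuous continuous_id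
    refine fun a ha => closure_minimal (fun a ha => ?_) hc ha
    obtain ⟨n, hn⟩ := mem_iUnion.1 ha
    refine 𝔰.fix_mono (ht.1 ⟨n + 1, rfl⟩) ?_
    rw [hf1]
    exact hn2 _ a hn
  let F : ℕ → Set K := fun n => closure A' ∩ {y | 𝔰.r (f n) y = x}
  have hFc : ∀ n, IsClosed (F n) := fun n =>
    isClosed_closure.inter (isClosed_eq (𝔰.r (f n)).continuous continuous_const)
  obtain ⟨y, hy⟩ := IsCompact.nonempty_iInter_of_sequence_nonempty_isCompact_isClosed F
    (by
      rintro n y ⟨hy1, hy2⟩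
      refine ⟨hy1, ?_⟩
      have h3 := (𝔰.comp_eq_of_le _ _ (hf n.le_succ) y).1
      have hy2' : 𝔰.r (f (n + 1)) y = x := hy2
      rw [Nat.succ_eq_add_one, hy2', hfx n] at h3
      exact h3.symm)
    (by
      intro n
      have h1 := hC (f n)
      rw [hfx n] at h1
      have h2 : x ∈ 𝔰.r (f n) '' closure A' := by
        refine closure_minimal ?_ ((isClosed_closure.isCompact.image
          (𝔰.r (f n)).continuous).isClosed) h1
        exact image_mono ((subset_iUnion (fun n => C (f n)) n).trans subset_closure)
      obtain ⟨y, hy, hyx⟩ := h2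
      exact ⟨y, hy, hyx⟩)
    (hFc 0).isCompact hFc
  rw [mem_iInter] at hy
  have h1 : 𝔰.r t y = x := tendsto_nhds_unique (hlim y)
    (tendsto_const_nhds.congr fun n => (hy n).2.symm)
  have h2 : y = x := by rw [← h1]; exact (hfix y (hy 0).1).symm
  exact h2 ▸ (hy 0).1

end RetractionalSkeleton

/-! ### A dual ball with a full retractional skeleton is Corson -/

section FullToCorson

variable {X : Type u} [NormedAddCommGroup X] [NormedSpace ℝ X]

theorem mem_closure_preimage {N : X → ℝ} {B : Set (WeakDual ℝ X)} (hB : B ⊆ dualBallWrt N)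
    (φ : dualBallWrt N) :
    φ ∈ closure ((↑) ⁻¹' B : Set (dualBallWrt N)) ↔ (φ : WeakDual ℝ X) ∈ closure B := by
  rw [closure_subtype, image_preimage_eq_inter_range, Subtype.range_val, inter_eq_left.2 hB]

theorem closure_subset_dualBallWrt {N : X → ℝ} (hN : IsEquivNorm N) {B : Set (WeakDual ℝ X)}
    (hB : B ⊆ dualBallWrt N) : closure B ⊆ dualBallWrt N :=
  closure_minimal hB (isCompact_dualBallWrt hN).isClosed

/-- Countable tightness of the subsets of a dual ball. -/
def TightBall (N : X → ℝ) : Prop :=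
  ∀ B ⊆ dualBallWrt N, ∀ φ ∈ closure B, ∃ B' ⊆ B, B'.Countable ∧ φ ∈ closure B'

theorem tightBall_of_full {N : X → ℝ} (hN : IsEquivNorm N)
    (𝔰 : RetractionalSkeleton (dualBallWrt N)) (hfull : ∀ φ, φ ∈ 𝔰.inducedSet) :
    TightBall N := by
  have : CompactSpace (dualBallWrt N) := isCompact_iff_compactSpace.1 (isCompact_dualBallWrt hN)
  intro B hB φ hφ
  have hφN := closure_subset_dualBallWrt hN hB hφ
  obtain ⟨A, hA, hAc, hφA⟩ := 𝔰.exists_countable_closure (hfull ⟨φ, hφN⟩)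
    (A := (↑) ⁻¹' B) (fun _ _ => hfull _) ((mem_closure_preimage hB _).2 hφ)
  refine ⟨(↑) '' A, by rintro _ ⟨ψ, hψ, rfl⟩; exact hA hψ, hAc.image _, ?_⟩
  exact image_closure_subset_closure_image continuous_subtype_val ⟨_, hφA, rfl⟩

/-- A full retractional skeleton provides the closing-off operations: each functional brings an index
fixing it, and each index brings vectors determining its retraction. Indices serve as the
additional objects of the system. -/
theorem exists_system_of_full {N : X → ℝ} (hN : IsEquivNorm N)
    (𝔰 : RetractionalSkeleton (dualBallWrt N)) (hfull : ∀ φ, φ ∈ 𝔰.inducedSet) :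
    Nonempty (ProjSystem N 𝔰.Γ) := by
  choose σ hσ using fun φ => 𝔰.mem_inducedSet.1 (hfull φ)
  choose ub hub1 hub2 using 𝔰.directed
  have hS : ∀ s, ∃ S : Set X, S.Countable ∧ ∀ φ ψ : dualBallWrt N,
      (∀ x ∈ S, (φ : WeakDual ℝ X) x = (ψ : WeakDual ℝ X) x) → 𝔰.r s φ = 𝔰.r s ψ := by
    intro s
    have := 𝔰.metrizable s
    obtain ⟨S, hSc, hS⟩ := exists_countable_determining hN
      (fun φ => (⟨𝔰.r s φ, φ, rfl⟩ : Set.range (𝔰.r s))) ((𝔰.r s).continuous.subtype_mk _)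
    exact ⟨S, hSc, fun φ ψ h => congrArg Subtype.val (hS φ ψ h)⟩
  choose S hSc hS using hS
  choose ν hν1 hν2 using exists_norming hN
  let ex : SysObj X 𝔰.Γ → SysObj X 𝔰.Γ → Set (SysObj X 𝔰.Γ) := fun a b => match a, b with
    | .inr (.inl φ), _ => ⋃ hφ : φ ∈ dualBallWrt N, {.inr (.inr (σ ⟨φ, hφ⟩))}
    | .inr (.inr s), .inr (.inr t) => insert (.inr (.inr (ub s t))) (Sum.inl '' S s)
    | _, _ => ∅
  refine ⟨⟨hN, ν, hν1, hν2, ex, ?_, ?_⟩⟩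
  · rintro (x | φ | s) (y | ψ | t)
    all_goals first
      | exact countable_empty
      | exact countable_iUnion fun _ => countable_singleton _
      | exact ((hSc _).image _).insert _
  intro M hM φ hφ h0
  have hBN : sysB N M ⊆ dualBallWrt N := fun ψ hψ => hψ.1
  have hφN := closure_subset_dualBallWrt hN hBN hφ
  have hzero : (0 : WeakDual ℝ X) ∈ dualBallWrt N :=
    fun x => (abs_zero (α := ℝ)).trans_le (hN.nonneg x)
  have hzM : (0 : WeakDual ℝ X) ∈ sysB N M := ⟨hzero, hM.base⟩
  obtain ⟨B', hB', hB'c, hφB'⟩ := tightBall_of_full hN 𝔰 hfull _ hBN φ hφ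
  obtain ⟨e, he⟩ := (hB'c.insert 0).exists_eq_range (insert_nonempty _ _)
  have heM : ∀ n, e n ∈ sysB N M := fun n => by
    have : e n ∈ insert 0 B' := he ▸ ⟨n, rfl⟩
    exact insert_subset hzM hB' this
  let s : ℕ → 𝔰.Γ := fun n => σ ⟨e n, (heM n).1⟩
  have hsM : ∀ n, (.inr (.inr (s n)) : SysObj X 𝔰.Γ) ∈ M := fun n =>
    hM.op_sub (.inr (.inl (e n))) (heM n).2 (.inr (.inl (e n))) (heM n).2
      (Or.inr (mem_iUnion.2 ⟨(heM n).1, rfl⟩))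
  -- An increasing sequence of indices in `M` whose supremum fixes `0` and `φ`.
  let g : ℕ → 𝔰.Γ := fun n => Nat.rec (s 0) (fun n w => ub w (s (n + 1))) n
  have hg : Monotone g := monotone_nat_of_le_succ fun n => hub1 _ _
  have hsg : ∀ n, s n ≤ g n := fun n => by
    cases n with
    | zero => exact le_rfl
    | succ n => exact hub2 _ _
  have hgM : ∀ n, (.inr (.inr (g n)) : SysObj X 𝔰.Γ) ∈ M := fun n => by
    induction n with
    | zero => exact hsM 0
    | succ n ih => exact hM.op_sub _ ih _ (hsM (n + 1)) (Or.inr (mem_insert _ _))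
  obtain ⟨t, ht, hlim⟩ := 𝔰.sup_mono g hg
  have hfix : ∀ n, 𝔰.r t ⟨e n, (heM n).1⟩ = ⟨e n, (heM n).1⟩ := fun n =>
    𝔰.fix_mono ((hsg n).trans (ht.1 ⟨n, rfl⟩)) (hσ _)
  have hfix' : ∀ ψ : dualBallWrt N, (ψ : WeakDual ℝ X) ∈ closure (insert 0 B') →
      𝔰.r t ψ = ψ := by
    intro ψ hψ
    rw [← mem_closure_preimage (insert_subset hzero (hB'.trans hBN))] at hψ
    have hc : IsClosed {x | 𝔰.r t x = x} := isClosed_eq (𝔰.r t).continuous continuous_id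
    have hsub : ((↑) ⁻¹' (insert 0 B') : Set (dualBallWrt N)) ⊆ {x | 𝔰.r t x = x} := by
      rintro ⟨χ, hχN⟩ hχ
      rw [he] at hχ
      obtain ⟨n, rfl⟩ := hχ
      exact hfix n
    exact closure_minimal hsub hc hψ
  have h1 := hfix' ⟨φ, hφN⟩ (closure_mono (subset_insert _ _) hφB')
  have h2 := hfix' ⟨0, hzero⟩ (subset_closure (mem_insert _ _))
  have h3 : 𝔰.r t ⟨φ, hφN⟩ = 𝔰.r t ⟨0, hzero⟩ := by
    refine tendsto_nhds_unique (hlim _) ((hlim _).congr fun n => ?_)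
    refine hS (g n) _ _ fun x hx => (h0 x ?_).symm
    exact hM.op_sub _ (hgM n) _ (hgM n) (Or.inr (Or.inr ⟨x, hx, rfl⟩))
  rw [h1, h2] at h3
  exact congrArg Subtype.val h3

theorem exists_smul_mem_dualBallWrt {N : X → ℝ} (hN : IsEquivNorm N) (φ : WeakDual ℝ X) :
    ∃ c : ℝ, c ≠ 0 ∧ c • φ ∈ dualBallWrt N := by
  obtain ⟨-, -, c, C, hc, h⟩ := hN
  have hpos : 0 < ‖WeakDual.toStrongDual φ‖ + 1 := by positivity
  refine ⟨c / (‖WeakDual.toStrongDual φ‖ + 1), by positivity, fun x => ?_⟩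
  have h1 : |φ x| ≤ ‖WeakDual.toStrongDual φ‖ * ‖x‖ :=
    (WeakDual.toStrongDual φ).le_opNorm x
  have : ((c / (‖WeakDual.toStrongDual φ‖ + 1)) • φ) x =
      (c / (‖WeakDual.toStrongDual φ‖ + 1)) * φ x := rfl
  rw [this, abs_mul, abs_of_pos (by positivity)]
  refine le_trans ?_ (h x).1
  rw [div_mul_eq_mul_div, div_le_iff₀ hpos]
  have h2 : |φ x| ≤ (‖WeakDual.toStrongDual φ‖ + 1) * ‖x‖ := by nlinarith [norm_nonneg x]
  nlinarith

/-- An uncountable subset of a well-order has an uncountable subset with countable initial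
segments. -/
theorem exists_subset_countable_initial {I : Type u} [LinearOrder I] [WellFoundedLT I] {J : Set I}
    (hJ : ¬ J.Countable) : ∃ J' ⊆ J, ¬ J'.Countable ∧ ∀ a ∈ J', (J' ∩ Iio a).Countable := by
  by_cases h : ∃ a, ¬ (J ∩ Iio a).Countable
  · let a := wellFounded_lt.min {a | ¬ (J ∩ Iio a).Countable} h
    have ha : ¬ (J ∩ Iio a).Countable := wellFounded_lt.min_mem {a | ¬ (J ∩ Iio a).Countable} h
    refine ⟨J ∩ Iio a, inter_subset_left, ha, fun b hb => ?_⟩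
    by_contra hcon
    refine wellFounded_lt.not_lt_min {a | ¬ (J ∩ Iio a).Countable} (x := b) ?_ hb.2
    exact fun hc => hcon (hc.mono (inter_subset_inter_left _ inter_subset_left))
  · push Not at h
    exact ⟨J, subset_rfl, hJ, fun a _ => h a⟩

variable [CompleteSpace X] {N : X → ℝ} {ι : Type u}

/-- Along an increasing well-ordered family of closed sets, a functional sees only countably many
of the increments of the projections. -/
theorem countable_increments (𝔖 : ProjSystem N ι) (hT : TightBall N) {I : Type u} [LinearOrder I]
    [WellFoundedLT I] {L L' : I → Set (SysObj X ι)} (hL : ∀ a, 𝔖.Closed (L a))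
    (hL' : ∀ a, 𝔖.Closed (L' a)) (h1 : ∀ a b, a < b → L a ⊆ L' b) (h2 : ∀ a, L' a ⊆ L a)
    (φ : WeakDual ℝ X) : {a | ∃ x, φ ((hL a).proj x) ≠ φ ((hL' a).proj x)}.Countable := by
  wlog hφ : φ ∈ dualBallWrt N generalizing φ
  · obtain ⟨c, hc, hcφ⟩ := exists_smul_mem_dualBallWrt 𝔖.hN φ
    refine (this (c • φ) hcφ).mono ?_
    rintro a ⟨x, hx⟩
    exact ⟨x, fun h => hx (mul_left_cancel₀ hc h)⟩
  have hLm : ∀ {a b}, a ≤ b → L a ⊆ L b := fun {a b} hab => by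
    rcases hab.eq_or_lt with rfl | h
    · exact subset_rfl
    · exact (h1 a b h).trans (h2 b)
  by_contra hJ
  obtain ⟨J, hJsub, hJunc, hJini⟩ := exists_subset_countable_initial hJ
  have hJne : Nonempty J := by
    by_contra h
    exact hJunc (by rw [not_nonempty_iff_eq_empty'.1 h]; exact countable_empty)
  have hM : 𝔖.Closed (⋃ a : J, L a) := OpClosed.iUnion (fun a : J => hL a) fun i j => by
    rcases le_total i j with h | h
    · exact ⟨j, hLm h, subset_rfl⟩
    · exact ⟨i, subset_rfl, hLm h⟩
  let ψ : WeakDual ℝ X := StrongDual.toWeakDual ((WeakDual.toStrongDual φ).comp hM.proj)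
  have hψ : ∀ x, ψ x = φ (hM.proj x) := fun x => rfl
  obtain ⟨B', hB', hB'c, hψB'⟩ := hT _ (fun χ hχ => hχ.1) ψ (hM.comp_mem_closure hφ hψ)
  have hB'1 : ∀ χ : B', ∃ a : J, .inr (.inl χ.1) ∈ L a := fun χ => mem_iUnion.1 (hB' χ.2).2
  choose α hα using hB'1
  have := hB'c.to_subtype
  -- Countably many elements of `J` are bounded in `J`.
  have hbd : ∃ a : J, ∀ χ, α χ ≤ a := by
    by_contra! hcon
    refine hJunc ((countable_iUnion fun χ : B' => hJini (α χ) (α χ).2).mono fun a ha => ?_)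
    obtain ⟨χ, hχ⟩ := hcon ⟨a, ha⟩
    exact mem_iUnion.2 ⟨χ, ha, hχ⟩
  obtain ⟨a, ha⟩ := hbd
  have hψa : ψ ∈ closure (sysB N (L a)) :=
    closure_mono (fun χ (hχ : χ ∈ B') => (⟨(hB' hχ).1, hLm (ha ⟨χ, hχ⟩) (hα ⟨χ, hχ⟩)⟩ :
      χ ∈ sysB N (L a))) hψB'
  have hc : ∃ c ∈ J, (a : I) < c := by
    by_contra! hcon
    refine hJunc (((hJini a a.2).insert (a : I)).mono fun c hc => ?_)
    rcases (hcon c hc).eq_or_lt with h | h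
    · exact Or.inl h
    · exact Or.inr ⟨hc, h⟩
  obtain ⟨c, hcJ, hac⟩ := hc
  obtain ⟨x, hx⟩ := hJsub hcJ
  have hcM : L c ⊆ ⋃ a : J, L a := subset_iUnion (fun a : J => L a) ⟨c, hcJ⟩
  apply hx
  rw [← (hL c).proj_outer hM hcM x, ← (hL' c).proj_outer hM ((h2 c).trans hcM) x, ← hψ, ← hψ,
    (hL c).proj_dual_closure x (closure_mono (ProjSystem.sysB_mono (hLm hac.le)) hψa),
    (hL' c).proj_dual_closure x (closure_mono (ProjSystem.sysB_mono (h1 _ _ hac)) hψa)]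

/-- Every closed set is spanned by vectors on which each functional has countable support; the
induction is over the cardinality of the closed set. -/
theorem exists_sigma_generators (𝔖 : ProjSystem N ι) (hT : TightBall N) (κ : Cardinal.{u}) :
    ∀ M, 𝔖.Closed M → Cardinal.mk M = κ → ∃ G : Set X,
      sysX M ⊆ (Submodule.span ℝ G).topologicalClosure ∧
      ∀ φ : WeakDual ℝ X, {g ∈ G | φ g ≠ 0}.Countable := by
  induction κ using WellFoundedLT.induction with
  | ind κ ih =>
  intro M hM hκ
  by_cases hκ0 : κ ≤ Cardinal.aleph0
  · have hMc : M.Countable := by rwa [← Cardinal.le_aleph0_iff_set_countable, hκ]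
    refine ⟨sysX M, fun x hx => Submodule.le_topologicalClosure _ (Submodule.subset_span hx), ?_⟩
    exact fun φ => (hMc.preimage Sum.inl_injective).mono fun x hx => hx.1
  push Not at hκ0
  have hcard : Cardinal.mk κ.ord.ToType = Cardinal.mk M := by rw [hκ, Cardinal.mk_ord_toType]
  obtain ⟨e⟩ := Cardinal.eq.1 hcard
  let I := κ.ord.ToType
  let L : I → Set (SysObj X ι) := fun a => 𝔖.hull ((fun b => (e b : SysObj X ι)) '' Iic a)
  let L' : I → Set (SysObj X ι) := fun a => 𝔖.hull ((fun b => (e b : SysObj X ι)) '' Iio a)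
  have hL : ∀ a, 𝔖.Closed (L a) := fun a => opClosed_opHull _
  have hL' : ∀ a, 𝔖.Closed (L' a) := fun a => opClosed_opHull _
  have h1 : ∀ a b, a < b → L a ⊆ L' b := fun a b hab =>
    opHull_mono (image_mono fun c (hc : c ≤ a) => hc.trans_lt hab)
  have h2 : ∀ a, L' a ⊆ L a := fun a => opHull_mono (image_mono Iio_subset_Iic_self)
  have hLc : ∀ a, Cardinal.mk (L a) < κ := fun a => by
    refine (mk_opHull_le 𝔖.op_countable _).trans_lt (max_lt hκ0 (Cardinal.mk_image_le.trans_lt ?_))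
    rw [← Iio_insert]
    refine Cardinal.mk_insert_le.trans_lt (Cardinal.add_lt_of_lt hκ0.le ?_ ?_)
    · have := Cardinal.mk_Iio_lt a
        (by rw [Cardinal.mk_ord_toType, Ordinal.type_toType])
      rwa [Cardinal.mk_ord_toType] at this
    · exact Cardinal.one_lt_aleph0.trans hκ0
  choose G hG1 hG2 using fun a => ih _ (hLc a) (L a) (hL a) rfl
  refine ⟨sysX (𝔖.hull ∅) ∪ ⋃ a, (fun g => (hL a).proj g - (hL' a).proj g) '' G a, ?_, ?_⟩
  · set W := (Submodule.span ℝ (sysX (𝔖.hull ∅) ∪ ⋃ a,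
      (fun g => (hL a).proj g - (hL' a).proj g) '' G a)).topologicalClosure with hW
    have hWc : IsClosed (W : Set X) := Submodule.isClosed_topologicalClosure _
    have hsub : sysX (𝔖.hull ∅) ∪ (⋃ a, (fun g => (hL a).proj g - (hL' a).proj g) '' G a) ⊆ W :=
      Submodule.subset_span.trans (Submodule.le_topologicalClosure _)
    have hLW : ∀ a, sysX (L a) ⊆ W := by
      intro a
      induction a using WellFoundedLT.induction with
      | ind a iha =>
      have hL'W : sysX (L' a) ⊆ W := by
        rcases isEmpty_or_nonempty (Iio a) with hE | hE
        · have : L' a = 𝔖.hull ∅ := by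
            simp only [L', isEmpty_coe_sort.1 hE, image_empty]
          rw [this]
          exact subset_union_left.trans hsub
        · have hU : L' a ⊆ ⋃ b : Iio a, L b := by
            refine opHull_subset (OpClosed.iUnion (fun b : Iio a => hL b) fun i j => ?_) ?_
            · have hLm : ∀ {a b}, a ≤ b → L a ⊆ L b := fun hab =>
                opHull_mono (image_mono (Iic_subset_Iic.2 hab))
              rcases le_total i j with h | h
              · exact ⟨j, hLm h, subset_rfl⟩
              · exact ⟨i, subset_rfl, hLm h⟩
            · rintro _ ⟨b, hb, rfl⟩
              exact mem_iUnion.2 ⟨⟨b, hb⟩, subset_opHull _ ⟨b, mem_Iic.2 le_rfl, rfl⟩⟩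
          intro x hx
          obtain ⟨b, hb⟩ := mem_iUnion.1 (hU hx)
          exact iha b b.2 hb
      intro x hx
      have hGW : (Submodule.span ℝ (G a)).topologicalClosure ≤
          W.comap ((hL a).proj : X →ₗ[ℝ] X) := by
        refine Submodule.topologicalClosure_minimal _ (Submodule.span_le.2 fun g hg => ?_)
          (hWc.preimage (hL a).proj.continuous)
        have hd : (hL a).proj g - (hL' a).proj g ∈ W :=
          hsub (Or.inr (mem_iUnion.2 ⟨a, g, hg, rfl⟩))
        have hp : (hL' a).proj g ∈ W := closure_minimal hL'W hWc ((hL' a).proj_mem g)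
        have := W.add_mem hd hp
        rwa [sub_add_cancel] at this
      have h3 : (hL a).proj x ∈ W := hGW (hG1 a hx)
      rwa [(hL a).proj_eq (subset_closure hx)] at h3
    intro x hx
    obtain ⟨a, ha⟩ := e.surjective ⟨.inl x, hx⟩
    refine hLW a (subset_opHull _ ⟨a, mem_Iic.2 le_rfl, ?_⟩)
    simp only [ha]
  · intro φ
    have hJ := countable_increments 𝔖 hT hL hL' h1 h2 φ
    have h0 : (sysX (𝔖.hull ∅)).Countable :=
      (opHull_countable 𝔖.op_countable countable_empty).preimage Sum.inl_injective
    have hQ : ∀ a, {g ∈ G a | φ ((hL a).proj g - (hL' a).proj g) ≠ 0}.Countable := fun a =>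
      hG2 a (StrongDual.toWeakDual ((WeakDual.toStrongDual φ).comp
        ((hL a).proj - (hL' a).proj)))
    refine (h0.union (hJ.biUnion fun a _ => (hQ a).image
      fun g => (hL a).proj g - (hL' a).proj g)).mono ?_
    rintro _ ⟨hx | hx, hne⟩
    · exact Or.inl hx
    · obtain ⟨a, g, hg, rfl⟩ := mem_iUnion.1 hx
      refine Or.inr (mem_biUnion (x := a) ⟨g, fun h => hne ?_⟩ ⟨g, ⟨hg, hne⟩, rfl⟩)
      rw [map_sub, h, sub_self]

theorem isCorsonCompact_of_full (hN : IsEquivNorm N) (𝔰 : RetractionalSkeleton (dualBallWrt N))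
    (hfull : ∀ φ, φ ∈ 𝔰.inducedSet) : IsCorsonCompact (dualBallWrt N) := by
  have : CompactSpace (dualBallWrt N) := isCompact_iff_compactSpace.1 (isCompact_dualBallWrt hN)
  obtain ⟨𝔖⟩ := exists_system_of_full hN 𝔰 hfull
  obtain ⟨G, hG1, hG2⟩ := exists_sigma_generators 𝔖 (tightBall_of_full hN 𝔰 hfull) _ Set.univ
    ⟨mem_univ _, fun _ _ _ _ => subset_univ _⟩ rfl
  let h : dualBallWrt N → G → ℝ := fun φ g => (φ : WeakDual ℝ X) g
  have hcont : Continuous h := continuous_pi fun g =>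
    (WeakDual.eval_continuous (g : X)).comp continuous_subtype_val
  have hinj : Function.Injective h := by
    intro φ ψ heq
    refine dualBallWrt_ext fun x => ?_
    have hx : x ∈ (Submodule.span ℝ G).topologicalClosure := hG1 (mem_univ (Sum.inl x : SysObj X 𝔰.Γ))
    refine closure_minimal (s := (Submodule.span ℝ G : Set X)) (fun y hy => ?_) (isClosed_eq
      (ContinuousLinearMap.continuous (φ : WeakDual ℝ X))
      (ContinuousLinearMap.continuous (ψ : WeakDual ℝ X))) hx
    exact LinearMap.eqOn_span (f := ((WeakDual.toStrongDual (φ : WeakDual ℝ X)) : X →ₗ[ℝ] ℝ))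
      (g := ((WeakDual.toStrongDual (ψ : WeakDual ℝ X)) : X →ₗ[ℝ] ℝ))
      (fun g hg => congrFun heq ⟨g, hg⟩) hy
  refine ⟨G, Set.range h, isCompact_range hcont, ?_,
    ⟨(hcont.isClosedEmbedding hinj).isEmbedding.toHomeomorph⟩⟩
  rintro _ ⟨φ, rfl⟩
  exact ((hG2 φ).preimage Subtype.val_injective).mono fun g hg =>
    (⟨g.2, hg⟩ : (g : X) ∈ G ∧ (φ : WeakDual ℝ X) g ≠ 0)

end FullToCorson

/-! ### Long sequences of functionals arising from a skeleton that is not full -/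

section LongSequence

/-- A well-order of type `ω₁`. -/
theorem exists_omega_one_order : ∃ (I : Type) (_ : LinearOrder I) (_ : WellFoundedLT I),
    Nonempty I ∧ (∀ a : I, (Iic a).Countable) ∧
      ∀ C : Set I, C.Countable → ∃ a, ∀ c ∈ C, c < a := by
  let I := (Cardinal.aleph 1).ord.ToType
  have hcard : Cardinal.mk I = Cardinal.aleph 1 := Cardinal.mk_ord_toType _
  have hI : ∀ a : I, (Iic a).Countable := by
    intro a
    rw [← Iio_insert]
    refine Set.Countable.insert _ ?_
    have h := Cardinal.mk_Iio_lt a (by rw [Cardinal.mk_ord_toType, Ordinal.type_toType])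
    rw [← Cardinal.le_aleph0_iff_set_countable, ← Order.lt_succ_iff, Cardinal.succ_aleph0]
    exact h.trans_eq hcard
  have hunc : ¬ (Set.univ : Set I).Countable := by
    rw [← Cardinal.le_aleph0_iff_set_countable, Cardinal.mk_univ, hcard, not_le]
    exact Cardinal.aleph0_lt_aleph_one
  refine ⟨I, inferInstance, inferInstance, ?_, hI, fun C hC => ?_⟩
  · by_contra h
    rw [not_nonempty_iff] at h
    exact hunc (by rw [univ_eq_empty_iff.2 h]; exact countable_empty)
  · by_contra! hcon
    refine hunc ((hC.biUnion fun c _ => hI c).mono fun a _ => ?_)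
    obtain ⟨c, hc, hac⟩ := hcon a
    exact mem_biUnion hc hac

variable {X : Type u} [NormedAddCommGroup X] [NormedSpace ℝ X]

theorem RetractionalSkeleton.eventually_eq_apply {N : X → ℝ}
    (𝔰 : RetractionalSkeleton (dualBallWrt N)) (p : dualBallWrt N) (f : X) :
    ∃ s₀, ∀ s, s₀ ≤ s → (𝔰.r s p : WeakDual ℝ X) f = (p : WeakDual ℝ X) f :=
  𝔰.eventually_eq (fun φ => (φ : WeakDual ℝ X) f)
    ((WeakDual.eval_continuous f).comp continuous_subtype_val) p

/-- If `p` is not induced by the skeleton, then bounded vectors uniformly distinguish `p` from its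
images `r s p` on long intervals of indices. -/
theorem exists_uniform_drop {N : X → ℝ} (𝔰 : RetractionalSkeleton (dualBallWrt N))
    {p : dualBallWrt N} (hp : p ∉ 𝔰.inducedSet) :
    ∃ n : ℕ, ∀ s₀, ∃ γ, s₀ ≤ γ ∧ ∀ l, γ ≤ l → ∃ f : X, ‖f‖ ≤ n ∧ ∀ s, γ ≤ s → s ≤ l →
      (𝔰.r s p : WeakDual ℝ X) f ≤ (p : WeakDual ℝ X) f - 1 := by
  suffices h : ∃ n : ℕ, ∃ γ, ∀ l, γ ≤ l → ∃ f : X, ‖f‖ ≤ n ∧ ∀ s, γ ≤ s → s ≤ l →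
      (𝔰.r s p : WeakDual ℝ X) f ≤ (p : WeakDual ℝ X) f - 1 by
    obtain ⟨n, γ, h⟩ := h
    refine ⟨n, fun s₀ => ?_⟩
    obtain ⟨γ', h1, h2⟩ := 𝔰.directed s₀ γ
    refine ⟨γ', h1, fun l hl => ?_⟩
    obtain ⟨f, hf1, hf2⟩ := h l (h2.trans hl)
    exact ⟨f, hf1, fun s hs hsl => hf2 s (h2.trans hs) hsl⟩
  by_contra! hcon
  choose L hL1 hL2 using hcon
  let g : ℕ → 𝔰.Γ := fun n => Nat.rec (Classical.arbitrary _) (fun n s => L n s) n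
  have hg1 : ∀ n, g (n + 1) = L n (g n) := fun n => rfl
  have hg : Monotone g := monotone_nat_of_le_succ fun n => hL1 n (g n)
  obtain ⟨t, ht, -⟩ := 𝔰.sup_mono g hg
  have hne : ∃ f, (𝔰.r t p : WeakDual ℝ X) f ≠ (p : WeakDual ℝ X) f := by
    by_contra! h
    exact hp (𝔰.mem_inducedSet.2 ⟨t, dualBallWrt_ext h⟩)
  obtain ⟨f₀, hf₀⟩ := hne
  obtain ⟨f, hf⟩ : ∃ f, (𝔰.r t p : WeakDual ℝ X) f = (p : WeakDual ℝ X) f - 2 := by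
    have hd : (p : WeakDual ℝ X) f₀ - (𝔰.r t p : WeakDual ℝ X) f₀ ≠ 0 := sub_ne_zero.2 hf₀.symm
    refine ⟨(2 / ((p : WeakDual ℝ X) f₀ - (𝔰.r t p : WeakDual ℝ X) f₀)) • f₀, ?_⟩
    rw [map_smul, map_smul, smul_eq_mul, smul_eq_mul]
    field_simp
    ring
  -- Witnesses of failure interlace with `g`, hence have the same supremum.
  have hs : ∀ k, ∃ s, g k ≤ s ∧ s ≤ g (k + 1) ∧
      (‖f‖ ≤ k → (p : WeakDual ℝ X) f - 1 < (𝔰.r s p : WeakDual ℝ X) f) := by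
    intro k
    by_cases hk : ‖f‖ ≤ k
    · obtain ⟨s, h1, h2, h3⟩ := hL2 k (g k) f hk
      exact ⟨s, h1, h2, fun _ => h3⟩
    · exact ⟨g k, le_rfl, hg (Nat.le_succ k), fun h => absurd h hk⟩
  choose s hs1 hs2 hs3 using hs
  obtain ⟨t', ht', hlim⟩ := 𝔰.sup_mono s
    (monotone_nat_of_le_succ fun k => (hs2 k).trans (hs1 (k + 1)))
  have htt : t' = t := by
    refine le_antisymm (ht'.2 ?_) (ht.2 ?_)
    · rintro _ ⟨k, rfl⟩; exact (hs2 k).trans (ht.1 ⟨k + 1, rfl⟩)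
    · rintro _ ⟨k, rfl⟩; exact (hs1 k).trans (ht'.1 ⟨_, rfl⟩)
  have h1 := tendsto_dualBallWrt.1 (hlim p) f
  obtain ⟨k₀, hk₀⟩ := exists_nat_ge ‖f‖
  have h2 : (p : WeakDual ℝ X) f - 1 ≤ (𝔰.r t' p : WeakDual ℝ X) f := by
    refine ge_of_tendsto h1 ?_
    filter_upwards [eventually_ge_atTop k₀] with k hk
    exact (hs3 k (hk₀.trans (by exact_mod_cast hk))).le
  rw [htt, hf] at h2
  linarith

/-- A long sequence of functionals that is eventually zero at every vector but is triangular with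
respect to a bounded long sequence of vectors. -/
structure LongSeq (X : Type u) [NormedAddCommGroup X] [NormedSpace ℝ X] (I : Type)
    [LinearOrder I] (w₁ w₃ : X) where
  d : I → WeakDual ℝ X
  F : I → X
  n : ℝ
  one_le : 1 ≤ n
  d_le : ∀ ξ x, |d ξ x| ≤ 2 * ‖x‖
  dF_le : ∀ ξ η, |d ξ (F η)| ≤ n
  low : ∀ ξ η, ξ ≤ η → d ξ (F η) ≤ -1
  high : ∀ ξ η, η < ξ → d ξ (F η) = 0
  eventually_zero : ∀ f, ∃ η, ∀ ξ, η ≤ ξ → d ξ f = 0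
  d_w₁ : ∀ ξ, d ξ w₁ = 0
  d_w₃ : ∀ ξ, d ξ w₃ = 0

/-- A real function on `ω₁` all of whose increasing sequences have convergent values is eventually
constant. -/
theorem eventually_const_of_seq {I : Type} [LinearOrder I] [Nonempty I]
    (hC : ∀ C : Set I, C.Countable → ∃ a, ∀ c ∈ C, c < a) (v : I → ℝ)
    (hv : ∀ a : ℕ → I, Monotone a → ∃ l, Tendsto (fun k => v (a k)) atTop (𝓝 l)) :
    ∃ η, ∀ ξ, η ≤ ξ → v ξ = v η := by
  have key : ∀ m : ℕ, ∃ η, ∀ ξ, η ≤ ξ → dist (v ξ) (v η) ≤ 1 / ((m : ℝ) + 1) := by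
    intro m
    by_contra! hcon
    choose b hb1 hb2 using hcon
    let a : ℕ → I := fun k => b^[k] (Classical.arbitrary I)
    have ha : ∀ k, a (k + 1) = b (a k) := fun k => Function.iterate_succ_apply' b k _
    obtain ⟨l, hl⟩ := hv a (monotone_nat_of_le_succ fun k => by rw [ha]; exact hb1 _)
    have h1 : Tendsto (fun k => dist (v (a (k + 1))) (v (a k))) atTop (𝓝 (dist l l)) :=
      ((tendsto_add_atTop_iff_nat 1).2 hl).dist hl
    rw [dist_self] at h1
    have hpos : (0 : ℝ) < 1 / ((m : ℝ) + 1) := by positivity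
    obtain ⟨k, hk⟩ := (h1.eventually (gt_mem_nhds hpos)).exists
    rw [ha] at hk
    exact lt_irrefl _ (hk.trans (hb2 (a k)))
  choose η hη using key
  obtain ⟨a, ha⟩ := hC (Set.range η) (countable_range η)
  refine ⟨a, fun ξ hξ => ?_⟩
  have h : ∀ m : ℕ, dist (v ξ) (v a) ≤ 1 / ((m : ℝ) + 1) + 1 / ((m : ℝ) + 1) := fun m => by
    have hm := (ha _ ⟨m, rfl⟩).le
    exact (dist_triangle_right _ _ (v (η m))).trans
      (add_le_add (hη m ξ (hm.trans hξ)) (hη m a hm))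
  have hlim : Tendsto (fun m : ℕ => 1 / ((m : ℝ) + 1) + 1 / ((m : ℝ) + 1)) atTop (𝓝 (0 + 0)) :=
    tendsto_one_div_add_atTop_nhds_zero_nat.add tendsto_one_div_add_atTop_nhds_zero_nat
  have := ge_of_tendsto' hlim h
  rw [add_zero] at this
  exact dist_le_zero.1 this

/-- A functional that is not induced yields a long sequence: `d ξ` is the difference of `r (l ξ) p`
and the limit of these functionals, for a suitable long increasing sequence `l` of indices. -/
theorem exists_longSeq (𝔰 : RetractionalSkeleton (dualBallWrt fun x : X => ‖x‖))
    {p : dualBallWrt fun x : X => ‖x‖} (hp : p ∉ 𝔰.inducedSet) {I : Type} [LinearOrder I]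
    [WellFoundedLT I] [Nonempty I] (hI : ∀ a : I, (Iic a).Countable)
    (hC : ∀ C : Set I, C.Countable → ∃ a, ∀ c ∈ C, c < a) (w₁ w₃ : X) :
    Nonempty (LongSeq X I w₁ w₃) := by
  have : CompactSpace (dualBallWrt fun x : X => ‖x‖) :=
    isCompact_iff_compactSpace.1 (isCompact_dualBallWrt isEquivNorm_norm)
  choose st hst using 𝔰.eventually_eq_apply p
  obtain ⟨n, hn⟩ := exists_uniform_drop 𝔰 hp
  obtain ⟨s₀, hs₁, hs₃⟩ := 𝔰.directed (st w₁) (st w₃)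
  obtain ⟨γ, hγ, hdrop⟩ := hn s₀
  have hdrop' : ∀ l, ∃ f : X, γ ≤ l → ‖f‖ ≤ n ∧ ∀ s, γ ≤ s → s ≤ l →
      (𝔰.r s p : WeakDual ℝ X) f ≤ (p : WeakDual ℝ X) f - 1 := fun l => by
    by_cases hl : γ ≤ l
    · obtain ⟨f, hf⟩ := hdrop l hl
      exact ⟨f, fun _ => hf⟩
    · exact ⟨0, fun h => absurd h hl⟩
  choose f hf using hdrop'
  -- Transfinite recursion: `l ξ` bounds all earlier indices and stabilization indices.
  have hstep : ∀ (ξ : I) (ih : ∀ η, η < ξ → 𝔰.Γ), ∃ t, γ ≤ t ∧ ∀ η (h : η < ξ),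
      ih η h ≤ t ∧ st (f (ih η h)) ≤ t := by
    intro ξ ih
    have : Countable (Iio ξ) := ((hI ξ).mono Iio_subset_Iic_self).to_subtype
    obtain ⟨t₁, h1⟩ := 𝔰.exists_upperBound fun η : Iio ξ => ih η η.2
    obtain ⟨t₂, h2⟩ := 𝔰.exists_upperBound fun η : Iio ξ => st (f (ih η η.2))
    obtain ⟨t₃, h3, h4⟩ := 𝔰.directed t₁ t₂
    obtain ⟨t, h5, h6⟩ := 𝔰.directed t₃ γ
    exact ⟨t, h6, fun η h => ⟨((h1 ⟨η, h⟩).trans h3).trans h5, ((h2 ⟨η, h⟩).trans h4).trans h5⟩⟩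
  choose step hstep1 hstep2 using hstep
  let l : I → 𝔰.Γ := wellFounded_lt.fix step
  have hl : ∀ ξ, l ξ = step ξ fun η _ => l η := fun ξ => wellFounded_lt.fix_eq step ξ
  have hlγ : ∀ ξ, γ ≤ l ξ := fun ξ => by rw [hl]; exact hstep1 _ _
  have hlt : ∀ η ξ, η < ξ → l η ≤ l ξ := fun η ξ h => by
    rw [hl ξ]; exact (hstep2 ξ (fun η _ => l η) η h).1
  have hlst : ∀ η ξ, η < ξ → st (f (l η)) ≤ l ξ := fun η ξ h => by
    rw [hl ξ]; exact (hstep2 ξ (fun η _ => l η) η h).2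
  have hlm : Monotone l := fun η ξ h => by
    rcases h.eq_or_lt with rfl | h
    · exact le_rfl
    · exact hlt _ _ h
  let x : I → dualBallWrt fun x : X => ‖x‖ := fun ξ => 𝔰.r (l ξ) p
  have hconst : ∀ g : X, ∃ η, ∀ ξ, η ≤ ξ → (x ξ : WeakDual ℝ X) g = (x η : WeakDual ℝ X) g := by
    refine fun g => eventually_const_of_seq hC _ fun a ha => ?_
    obtain ⟨t, -, ht⟩ := 𝔰.sup_mono (fun k => l (a k)) (hlm.comp ha)
    exact ⟨_, tendsto_dualBallWrt.1 (ht p) g⟩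
  obtain ⟨q, hq⟩ : ∃ q, Tendsto x (Ultrafilter.of atTop : Ultrafilter I) (𝓝 q) := by
    obtain ⟨q, -, hq⟩ := isCompact_univ.ultrafilter_le_nhds
      ((Ultrafilter.of atTop : Ultrafilter I).map x) (by simp)
    exact ⟨q, hq⟩
  have hq' : ∀ g : X, ∃ η, ∀ ξ, η ≤ ξ → (x ξ : WeakDual ℝ X) g = (q : WeakDual ℝ X) g := by
    intro g
    obtain ⟨η, hη⟩ := hconst g
    have hc : Tendsto (fun ξ => (x ξ : WeakDual ℝ X) g) (Ultrafilter.of atTop : Ultrafilter I)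
        (𝓝 ((x η : WeakDual ℝ X) g)) := by
      refine tendsto_const_nhds.congr' ?_
      have : ∀ᶠ ξ in (atTop : Filter I), (x η : WeakDual ℝ X) g = (x ξ : WeakDual ℝ X) g := by
        filter_upwards [eventually_ge_atTop η] with ξ hξ
        exact (hη ξ hξ).symm
      exact Ultrafilter.of_le _ this
    have := tendsto_nhds_unique (tendsto_dualBallWrt.1 hq g) hc
    exact ⟨η, fun ξ hξ => by rw [this, hη ξ hξ]⟩
  have hxp : ∀ g ξ, st g ≤ l ξ → (x ξ : WeakDual ℝ X) g = (p : WeakDual ℝ X) g := fun g ξ h =>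
    hst g _ h
  have hqw : ∀ w, (∀ ξ, st w ≤ l ξ) → ∀ ξ, (x ξ : WeakDual ℝ X) w = (q : WeakDual ℝ X) w := by
    intro w hw ξ
    obtain ⟨η, hη⟩ := hq' w
    rw [← hη η le_rfl, hxp _ _ (hw _), hxp _ _ (hw _)]
  have hqF : ∀ η, (q : WeakDual ℝ X) (f (l η)) = (p : WeakDual ℝ X) (f (l η)) := by
    intro η
    obtain ⟨ζ, hζ⟩ := hq' (f (l η))
    obtain ⟨a, ha⟩ := hC {ζ, η} ((countable_singleton _).insert _)
    rw [← hζ a (ha ζ (by simp)).le]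
    exact hxp _ _ (hlst η a (ha η (by simp)))
  have hsub : ∀ ξ g, ((x ξ : WeakDual ℝ X) - (q : WeakDual ℝ X)) g =
      (x ξ : WeakDual ℝ X) g - (q : WeakDual ℝ X) g := fun _ _ => rfl
  have hdle : ∀ ξ g, |((x ξ : WeakDual ℝ X) - (q : WeakDual ℝ X)) g| ≤ 2 * ‖g‖ := fun ξ g => by
    rw [hsub]
    have h1 := (x ξ).2 g
    have h2 := q.2 g
    have h3 := abs_sub ((x ξ : WeakDual ℝ X) g) ((q : WeakDual ℝ X) g)
    simp only at h1 h2
    linarith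
  have hFn : ∀ η, ‖f (l η)‖ ≤ n := fun η => (hf _ (hlγ η)).1
  exact ⟨{
    d := fun ξ => (x ξ : WeakDual ℝ X) - (q : WeakDual ℝ X)
    F := fun η => f (l η)
    n := 2 * n + 1
    one_le := by linarith [(Nat.cast_nonneg n : (0 : ℝ) ≤ n)]
    d_le := hdle
    dF_le := fun ξ η => (hdle ξ _).trans (by linarith [hFn η])
    low := fun ξ η h => by
      rw [hsub, hqF]
      linarith [(hf _ (hlγ η)).2 (l ξ) (hlγ ξ) (hlm h)]
    high := fun ξ η h => by rw [hsub, hqF, hxp _ _ (hlst η ξ h), sub_self]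
    eventually_zero := fun g => by
      obtain ⟨η, hη⟩ := hq' g
      exact ⟨η, fun ξ hξ => by rw [hsub, hη ξ hξ, sub_self]⟩
    d_w₁ := fun ξ => by
      rw [hsub, hqw w₁ (fun ξ => (hs₁.trans hγ).trans (hlγ ξ)), sub_self]
    d_w₃ := fun ξ => by
      rw [hsub, hqw w₃ (fun ξ => (hs₃.trans hγ).trans (hlγ ξ)), sub_self] }⟩

end LongSequence

/-! ### A renorming without retractional skeleton -/

section Renorming

variable {X : Type u} [NormedAddCommGroup X] [NormedSpace ℝ X]

/-- A bounded set `V` of functionals containing a small ball generates the dual ball of an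
equivalent norm, the supremum of `|φ x|` over `φ ∈ V`. -/
theorem exists_equivNorm_of_set (V : Set (WeakDual ℝ X)) (R ε : ℝ) (hε : 0 < ε)
    (hR : ∀ φ ∈ V, ∀ x, |φ x| ≤ R * ‖x‖)
    (hV : ∀ φ ∈ dualBallWrt (fun x : X => ‖x‖), ε • φ ∈ V) :
    ∃ N : X → ℝ, IsEquivNorm N ∧ V ⊆ dualBallWrt N ∧
      ∀ x b, (∀ φ ∈ V, |φ x| ≤ b) → N x ≤ b := by
  have hne : Nonempty V := by
    obtain ⟨φ, hφ, -⟩ := exists_norming (isEquivNorm_norm (X := X)) 0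
    exact ⟨⟨_, hV φ hφ⟩⟩
  have hbdd : ∀ x, BddAbove (Set.range fun φ : V => |(φ : WeakDual ℝ X) x|) := fun x =>
    ⟨R * ‖x‖, by rintro _ ⟨φ, rfl⟩; exact hR φ φ.2 x⟩
  have hle : ∀ x (φ : V), |(φ : WeakDual ℝ X) x| ≤ ⨆ φ : V, |(φ : WeakDual ℝ X) x| :=
    fun x φ => le_ciSup (hbdd x) φ
  refine ⟨fun x => ⨆ φ : V, |(φ : WeakDual ℝ X) x|, ⟨fun a x => ?_, fun x y => ?_, ε, R, hε,
    fun x => ⟨?_, ciSup_le fun φ => hR φ φ.2 x⟩⟩, fun φ hφ x => hle x ⟨φ, hφ⟩,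
    fun x b hb => ciSup_le fun φ => hb φ φ.2⟩
  · simp only [map_smul, smul_eq_mul, abs_mul]
    exact (Real.mul_iSup_of_nonneg (abs_nonneg a) _).symm
  · refine ciSup_le fun φ => ?_
    rw [map_add]
    exact (abs_add_le _ _).trans (add_le_add (hle x φ) (hle y φ))
  · obtain ⟨φ, hφ, h⟩ := exists_norming (isEquivNorm_norm (X := X)) x
    refine le_trans (le_of_eq ?_) (hle x ⟨_, hV φ hφ⟩)
    have : (ε • φ) x = ε * φ x := rfl
    rw [this, h, abs_of_nonneg (by positivity)]

/-- Two biorthogonal pairs of vectors and functionals. -/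
structure BiorthPair (X : Type u) [NormedAddCommGroup X] [NormedSpace ℝ X] where
  w₁ : X
  w₃ : X
  e₁ : WeakDual ℝ X
  e₃ : WeakDual ℝ X
  e₁w₁ : e₁ w₁ = 1
  e₁w₃ : e₁ w₃ = 0
  e₃w₁ : e₃ w₁ = 0
  e₃w₃ : e₃ w₃ = 1

/-- A dual ball with a functional that is not induced belongs to a space of dimension at least two. -/
theorem exists_biorthPair {N : X → ℝ} (𝔰 : RetractionalSkeleton (dualBallWrt N))
    {p : dualBallWrt N} (hp : p ∉ 𝔰.inducedSet) : Nonempty (BiorthPair X) := by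
  -- Stabilization at `w` shows that `p` is not determined by its value at `w`.
  have key : ∀ w : X, ∃ w', ∀ c : ℝ, w' ≠ c • w := by
    intro w
    obtain ⟨s, hs⟩ := 𝔰.eventually_eq_apply p w
    by_contra! h
    refine hp (𝔰.mem_inducedSet.2 ⟨s, dualBallWrt_ext fun x => ?_⟩)
    obtain ⟨c, rfl⟩ := h x
    rw [map_smul, map_smul, hs s le_rfl]
  obtain ⟨w₃, h₃⟩ := key 0
  have hw₃ : w₃ ≠ 0 := by simpa using h₃ 0
  obtain ⟨w, hw⟩ := key w₃
  obtain ⟨e₃, he₃⟩ := SeparatingDual.exists_eq_one (R := ℝ) hw₃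
  have hw₁ : w - e₃ w • w₃ ≠ 0 := sub_ne_zero.2 (hw _)
  obtain ⟨g, hg⟩ := SeparatingDual.exists_eq_one (R := ℝ) hw₁
  have h31 : e₃ (w - e₃ w • w₃) = 0 := by simp [he₃]
  refine ⟨⟨w - e₃ w • w₃, w₃, StrongDual.toWeakDual (g - g w₃ • e₃), StrongDual.toWeakDual e₃,
    ?_, ?_, h31, he₃⟩⟩
  · change g (w - e₃ w • w₃) - g w₃ * e₃ (w - e₃ w • w₃) = 1
    rw [h31, hg]; ring
  · change g w₃ - g w₃ * e₃ w₃ = 0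
    rw [he₃]; ring

/-- The Euclidean estimate behind the smoothness of the circle of generators. -/
theorem circle_sq_le {c s c' s' t u v τ : ℝ} (hcs : c ^ 2 + s ^ 2 = 1) (hcs' : c' ^ 2 + s' ^ 2 = 1)
    (ht : 0 < t) (hτ : c * u + s * v ≤ τ) (hz : 1 / 2 ≤ 1 + t * τ) :
    (c' * (c + t * u) + s' * (s + t * v)) ^ 2 ≤ (1 + t * τ + t ^ 2 * (u ^ 2 + v ^ 2)) ^ 2 := by
  have h1 : (c' * (c + t * u) + s' * (s + t * v)) ^ 2 ≤ (c + t * u) ^ 2 + (s + t * v) ^ 2 := by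
    have e : (c' * (c + t * u) + s' * (s + t * v)) ^ 2 =
        (c' ^ 2 + s' ^ 2) * ((c + t * u) ^ 2 + (s + t * v) ^ 2) -
          (c' * (s + t * v) - s' * (c + t * u)) ^ 2 := by ring
    rw [e, hcs', one_mul]
    exact sub_le_self _ (sq_nonneg _)
  have h2 : (c + t * u) ^ 2 + (s + t * v) ^ 2 ≤
      1 + 2 * (t * τ) + t ^ 2 * (u ^ 2 + v ^ 2) := by
    have e : (c + t * u) ^ 2 + (s + t * v) ^ 2 =
        (c ^ 2 + s ^ 2) + 2 * (t * (c * u + s * v)) + t ^ 2 * (u ^ 2 + v ^ 2) := by ring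
    rw [e, hcs]
    linarith [mul_le_mul_of_nonneg_left hτ ht.le]
  have ha : 0 ≤ t ^ 2 * (u ^ 2 + v ^ 2) := by positivity
  generalize t ^ 2 * (u ^ 2 + v ^ 2) = a at *
  generalize t * τ = z at *
  have e : (1 + z + a) ^ 2 = 1 + 2 * z + a + (z ^ 2 + a ^ 2 + 2 * (a * (1 + z - 1 / 2))) := by ring
  have h3 : 0 ≤ a * (1 + z - 1 / 2) := mul_nonneg ha (by linarith)
  linarith [sq_nonneg z, sq_nonneg a]

variable {I : Type} [LinearOrder I] (b : BiorthPair X) (S : LongSeq X I b.w₁ b.w₃)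

/-- The generators of the dual ball of the renorming: the translated long sequence, a circle
through its limit `e₃`, and a small ball. -/
def renormSet (ε : ℝ) : Set (WeakDual ℝ X) :=
  (Set.range fun ξ => b.e₃ + S.d ξ) ∪
    {φ | ∃ c s : ℝ, c ^ 2 + s ^ 2 = 1 ∧ φ = c • b.e₃ + s • b.e₁} ∪
    (fun φ => ε • φ) '' dualBallWrt (fun x : X => ‖x‖)

variable {b S}

set_option maxHeartbeats 1000000 in
/-- The local behaviour of the new norm at the points `c w₃ + s w₁` of the circle: supporting
functionals are controlled by the generators that are active there. -/
theorem le_of_support {ε : ℝ} (hε : 0 < ε) (hεw : ε * (‖b.w₁‖ + ‖b.w₃‖) ≤ 1 / 2) {N : X → ℝ}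
    (hNle : ∀ x r, (∀ φ ∈ renormSet b S ε, |φ x| ≤ r) → N x ≤ r) {c s : ℝ}
    (hcs : c ^ 2 + s ^ 2 = 1) (hc : 0 < c) {φ : WeakDual ℝ X} (hφ : φ ∈ dualBallWrt N)
    (hφw : φ (c • b.w₃ + s • b.w₁) = 1) {x : X} {τ : ℝ} (hτ : c * b.e₃ x + s * b.e₁ x ≤ τ)
    (hy : c < 1 ∨ ∀ ξ, b.e₃ x + S.d ξ x ≤ τ) : φ x ≤ τ := by
  have hc1 : c ≤ 1 := by nlinarith [sq_nonneg s]
  have hs1 : |s| ≤ 1 := by rw [← sq_le_one_iff_abs_le_one]; nlinarith [sq_nonneg c]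
  set A := (b.e₃ x) ^ 2 + (b.e₁ x) ^ 2 with hA
  have hA0 : 0 ≤ A := by positivity
  set R := |b.e₃ x| + 2 * ‖x‖ + ε * ‖x‖ + |τ| with hR
  have hsmall : ∀ δ : ℝ, 0 < δ → ∀ᶠ t in 𝓝[>] (0 : ℝ), t * R < δ := by
    intro δ hδ
    have : Tendsto (fun t : ℝ => t * R) (𝓝[>] 0) (𝓝 (0 * R)) :=
      ((continuous_mul_const R).tendsto 0).mono_left nhdsWithin_le_nhds
    rw [zero_mul] at this
    exact this.eventually (gt_mem_nhds hδ)
  have hcl : ∀ᶠ t in 𝓝[>] (0 : ℝ), c < 1 → t * R < 1 - c := by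
    by_cases h : c < 1
    · filter_upwards [hsmall (1 - c) (by linarith)] with t ht _ using ht
    · exact Eventually.of_forall fun t ht => absurd ht h
  have hmain : ∀ᶠ t in 𝓝[>] (0 : ℝ), φ x ≤ τ + t * A := by
    filter_upwards [self_mem_nhdsWithin, hsmall (1 / 2) (by norm_num), hcl] with t ht0 ht1 ht2
    have ht : 0 < t := ht0
    have hmul : ∀ a, |a| ≤ R → |t * a| ≤ t * R := fun a ha => by
      rw [abs_mul, abs_of_pos ht]; exact mul_le_mul_of_nonneg_left ha ht.le
    have e3R := abs_nonneg (b.e₃ x)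
    have nx := norm_nonneg x
    have τ0 := abs_nonneg τ
    have εx : 0 ≤ ε * ‖x‖ := by positivity
    have hτR : t * |τ| ≤ t * R := mul_le_mul_of_nonneg_left (by linarith) ht.le
    have htτ : |t * τ| ≤ t * |τ| := by rw [abs_mul, abs_of_pos ht]
    have htτ' := abs_le.1 htτ
    have htA : 0 ≤ t ^ 2 * A := by positivity
    have hest : N (c • b.w₃ + s • b.w₁ + t • x) ≤ 1 + t * τ + t ^ 2 * A := by
      refine hNle _ _ ?_
      rintro ψ ((⟨ξ, rfl⟩ | ⟨c', s', hcs', rfl⟩) | ⟨χ, hχ, rfl⟩)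
      · have hval : (b.e₃ + S.d ξ) (c • b.w₃ + s • b.w₁ + t • x) =
            c + t * (b.e₃ x + S.d ξ x) := by
          change b.e₃ (c • b.w₃ + s • b.w₁ + t • x) + S.d ξ (c • b.w₃ + s • b.w₁ + t • x) = _
          simp only [map_add, map_smul, smul_eq_mul, b.e₃w₃, b.e₃w₁, S.d_w₁, S.d_w₃]
          ring
        simp only at hval ⊢
        rw [hval]
        have hd := abs_le.1 (S.d_le ξ x)
        have he := abs_le.1 (le_refl |b.e₃ x|)
        have hlow : -(t * (|b.e₃ x| + 2 * ‖x‖)) ≤ t * (b.e₃ x + S.d ξ x) := by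
          rw [← mul_neg]; exact mul_le_mul_of_nonneg_left (by linarith) ht.le
        have hupp : t * (b.e₃ x + S.d ξ x) ≤ t * (|b.e₃ x| + 2 * ‖x‖) :=
          mul_le_mul_of_nonneg_left (by linarith) ht.le
        have hRt : t * (|b.e₃ x| + 2 * ‖x‖) + t * |τ| ≤ t * R := by
          rw [← mul_add]; exact mul_le_mul_of_nonneg_left (by linarith) ht.le
        rw [abs_le]
        constructor
        · linarith
        · rcases hy with h | h
          · linarith [ht2 h]
          · have := mul_le_mul_of_nonneg_left (h ξ) ht.le
            linarith
      · have hval : (c' • b.e₃ + s' • b.e₁) (c • b.w₃ + s • b.w₁ + t • x) =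
            c' * (c + t * b.e₃ x) + s' * (s + t * b.e₁ x) := by
          change c' * b.e₃ (c • b.w₃ + s • b.w₁ + t • x) +
            s' * b.e₁ (c • b.w₃ + s • b.w₁ + t • x) = _
          simp only [map_add, map_smul, smul_eq_mul, b.e₃w₃, b.e₃w₁, b.e₁w₁, b.e₁w₃]
          ring
        rw [hval]
        have hz : 1 / 2 ≤ 1 + t * τ := by linarith
        refine abs_le_of_sq_le_sq ?_ (by linarith)
        exact circle_sq_le hcs hcs' ht hτ (by linarith)
      · have hval : (ε • χ) (c • b.w₃ + s • b.w₁ + t • x) =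
            ε * (c * χ b.w₃ + s * χ b.w₁ + t * χ x) := by
          change ε * χ (c • b.w₃ + s • b.w₁ + t • x) = _
          simp only [map_add, map_smul, smul_eq_mul]
        simp only at hval ⊢
        rw [hval, abs_mul, abs_of_pos hε]
        have h3 : |c * χ b.w₃| ≤ ‖b.w₃‖ := by
          rw [abs_mul, abs_of_pos hc]
          exact (mul_le_of_le_one_left (abs_nonneg _) hc1).trans (hχ _)
        have h1 : |s * χ b.w₁| ≤ ‖b.w₁‖ := by
          rw [abs_mul]
          exact (mul_le_of_le_one_left (abs_nonneg _) hs1).trans (hχ _)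
        have hx : |t * χ x| ≤ t * ‖x‖ := by
          rw [abs_mul, abs_of_pos ht]
          exact mul_le_mul_of_nonneg_left (hχ x) ht.le
        have htri : |c * χ b.w₃ + s * χ b.w₁ + t * χ x| ≤ ‖b.w₁‖ + ‖b.w₃‖ + t * ‖x‖ :=
          (abs_add_three _ _ _).trans (by linarith)
        have hfin := mul_le_mul_of_nonneg_left htri hε.le
        have hRt : t * (ε * ‖x‖) + t * |τ| ≤ t * R := by
          rw [← mul_add]; exact mul_le_mul_of_nonneg_left (by linarith) ht.le
        have hexp : ε * (‖b.w₁‖ + ‖b.w₃‖ + t * ‖x‖) =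
            ε * (‖b.w₁‖ + ‖b.w₃‖) + t * (ε * ‖x‖) := by ring
        linarith
    have h4 := (le_abs_self _).trans ((hφ _).trans hest)
    rw [map_add, hφw, map_smul, smul_eq_mul] at h4
    have h5 : t * φ x ≤ t * (τ + t * A) := by linarith
    exact le_of_mul_le_mul_left h5 ht
  have hlim : Tendsto (fun t : ℝ => τ + t * A) (𝓝[>] 0) (𝓝 (τ + 0 * A)) := by
    have : Continuous fun t : ℝ => τ + t * A := by fun_prop
    exact (this.tendsto 0).mono_left nhdsWithin_le_nhds
  rw [zero_mul, add_zero] at hlim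
  exact ge_of_tendsto hlim hmain

end Renorming

/-! ### The renormed dual ball has no retractional skeleton -/

section NoSkeleton

variable {X : Type u} [NormedAddCommGroup X] [NormedSpace ℝ X]

theorem RetractionalSkeleton.exists_induced_agreeing {N : X → ℝ}
    (𝔱 : RetractionalSkeleton (dualBallWrt N)) (φ : dualBallWrt N) {ι : Type} [Countable ι]
    (f : ι → X) : ∃ ψ ∈ 𝔱.inducedSet, ∀ i, (ψ : WeakDual ℝ X) (f i) = (φ : WeakDual ℝ X) (f i) := by
  choose s hs using fun i => 𝔱.eventually_eq_apply φ (f i)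
  obtain ⟨t, ht⟩ := 𝔱.exists_upperBound s
  exact ⟨𝔱.r t φ, mem_iUnion.2 ⟨t, φ, rfl⟩, fun i => hs i t (ht i)⟩

variable {I : Type} [LinearOrder I] {b : BiorthPair X} {S : LongSeq X I b.w₁ b.w₃}

/-- Points `c e₃ + s e₁` of the circle with `0 < c < 1` are determined by a single vector among the
elements of the ball, hence are induced by any skeleton. -/
theorem circle_mem_inducedSet {ε : ℝ} (hε : 0 < ε) (hεw : ε * (‖b.w₁‖ + ‖b.w₃‖) ≤ 1 / 2)
    {N : X → ℝ} (hNle : ∀ x r, (∀ φ ∈ renormSet b S ε, |φ x| ≤ r) → N x ≤ r)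
    (hsub : renormSet b S ε ⊆ dualBallWrt N) (𝔱 : RetractionalSkeleton (dualBallWrt N)) {c s : ℝ}
    (hcs : c ^ 2 + s ^ 2 = 1) (hc : 0 < c) (hc1 : c < 1) :
    (⟨c • b.e₃ + s • b.e₁, hsub (Or.inl (Or.inr ⟨c, s, hcs, rfl⟩))⟩ : dualBallWrt N) ∈
      𝔱.inducedSet := by
  have hv : ∀ x, (c • b.e₃ + s • b.e₁) x = c * b.e₃ x + s * b.e₁ x := fun x => rfl
  obtain ⟨ψ, hψ, h⟩ := 𝔱.exists_induced_agreeing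
    ⟨c • b.e₃ + s • b.e₁, hsub (Or.inl (Or.inr ⟨c, s, hcs, rfl⟩))⟩
    (fun _ : Unit => c • b.w₃ + s • b.w₁)
  have h1 : (ψ : WeakDual ℝ X) (c • b.w₃ + s • b.w₁) = 1 := by
    rw [h ()]
    change (c • b.e₃ + s • b.e₁) (c • b.w₃ + s • b.w₁) = 1
    rw [hv]
    simp only [map_add, map_smul, smul_eq_mul, b.e₃w₃, b.e₃w₁, b.e₁w₁, b.e₁w₃]
    linarith
  have hle : ∀ x, (ψ : WeakDual ℝ X) x ≤ c * b.e₃ x + s * b.e₁ x := fun x =>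
    le_of_support hε hεw hNle hcs hc ψ.2 h1 le_rfl (Or.inl hc1)
  suffices he : (⟨c • b.e₃ + s • b.e₁, hsub (Or.inl (Or.inr ⟨c, s, hcs, rfl⟩))⟩ :
      dualBallWrt N) = ψ by rwa [he]
  refine dualBallWrt_ext fun x => ?_
  have h2 := hle x
  have h3 := hle (-x)
  simp only [map_neg] at h3
  change c * b.e₃ x + s * b.e₁ x = (ψ : WeakDual ℝ X) x
  linarith

/-- The limit `e₃` of the circle points is induced as well. -/
theorem e₃_mem_inducedSet {ε : ℝ} (hε : 0 < ε) (hεw : ε * (‖b.w₁‖ + ‖b.w₃‖) ≤ 1 / 2)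
    {N : X → ℝ} (hNle : ∀ x r, (∀ φ ∈ renormSet b S ε, |φ x| ≤ r) → N x ≤ r)
    (hsub : renormSet b S ε ⊆ dualBallWrt N) (𝔱 : RetractionalSkeleton (dualBallWrt N))
    (he : b.e₃ ∈ dualBallWrt N) : (⟨b.e₃, he⟩ : dualBallWrt N) ∈ 𝔱.inducedSet := by
  -- Rational parametrization of the circle near `(1, 0)`.
  let m : ℕ → ℝ := fun k => 1 / ((k : ℝ) + 1 + 1)
  have hm0 : ∀ k, 0 < m k := fun k => by positivity
  have hm1 : ∀ k, m k < 1 := fun k => by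
    rw [div_lt_one (by positivity)]; linarith [(Nat.cast_nonneg k : (0 : ℝ) ≤ k)]
  have hsq : ∀ k, m k ^ 2 < 1 := fun k => by nlinarith [hm0 k, hm1 k]
  have hm : Tendsto m atTop (𝓝 0) := by
    have := (tendsto_add_atTop_iff_nat 1).2 (tendsto_one_div_add_atTop_nhds_zero_nat (𝕜 := ℝ))
    refine this.congr fun k => ?_
    push_cast
    rfl
  let c : ℕ → ℝ := fun k => (1 - m k ^ 2) / (1 + m k ^ 2)
  let s : ℕ → ℝ := fun k => 2 * m k / (1 + m k ^ 2)
  have hcs : ∀ k, c k ^ 2 + s k ^ 2 = 1 := fun k => by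
    have : (1 + m k ^ 2) ≠ 0 := by positivity
    simp only [c, s]
    field_simp
    ring
  have hc0 : ∀ k, 0 < c k := fun k => div_pos (by linarith [hsq k]) (by positivity)
  have hc1 : ∀ k, c k < 1 := fun k => by
    rw [div_lt_one (by positivity)]; linarith [pow_pos (hm0 k) 2]
  have hden : Tendsto (fun k => 1 + m k ^ 2) atTop (𝓝 (1 + 0 ^ 2)) := (hm.pow 2).const_add 1
  have hc : Tendsto c atTop (𝓝 1) := by
    have := ((hm.pow 2).const_sub 1).div hden (by norm_num)
    rwa [show ((1 : ℝ) - 0 ^ 2) / (1 + 0 ^ 2) = 1 by norm_num] at this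
  have hs : Tendsto s atTop (𝓝 0) := by
    have := (hm.const_mul 2).div hden (by norm_num)
    rwa [show (2 : ℝ) * 0 / (1 + 0 ^ 2) = 0 by norm_num] at this
  let y : ℕ → dualBallWrt N := fun k =>
    ⟨c k • b.e₃ + s k • b.e₁, hsub (Or.inl (Or.inr ⟨c k, s k, hcs k, rfl⟩))⟩
  have hy : Tendsto y atTop (𝓝 ⟨b.e₃, he⟩) := by
    refine tendsto_dualBallWrt.2 fun x => ?_
    have := (hc.mul_const (b.e₃ x)).add (hs.mul_const (b.e₁ x))
    rwa [one_mul, zero_mul, add_zero] at this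
  obtain ⟨t, ht⟩ := 𝔱.exists_fix_of_countable (countable_range y) (by
    rintro _ ⟨k, rfl⟩
    exact circle_mem_inducedSet hε hεw hNle hsub 𝔱 (hcs k) (hc0 k) (hc1 k))
  exact 𝔱.mem_inducedSet.2 ⟨t, ht _ (mem_closure_of_tendsto hy
    (Eventually.of_forall fun k => mem_range_self k))⟩

/-- The renormed dual ball admits no retractional skeleton: `e₃` would be in the closure of a long
sequence of induced points, without being in the closure of any countable part of it. -/
theorem not_skeleton_renorm [Nonempty I] (hI : ∀ a : I, (Iic a).Countable)
    (hC : ∀ C : Set I, C.Countable → ∃ a, ∀ c ∈ C, c < a)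
    {ε : ℝ} (hε : 0 < ε) (hεw : ε * (‖b.w₁‖ + ‖b.w₃‖) ≤ 1 / 2)
    {N : X → ℝ} (hN : IsEquivNorm N)
    (hNle : ∀ x r, (∀ φ ∈ renormSet b S ε, |φ x| ≤ r) → N x ≤ r)
    (hsub : renormSet b S ε ⊆ dualBallWrt N) (𝔱 : RetractionalSkeleton (dualBallWrt N)) :
    False := by
  have : CompactSpace (dualBallWrt N) := isCompact_iff_compactSpace.1 (isCompact_dualBallWrt hN)
  have he : b.e₃ ∈ dualBallWrt N :=
    hsub (Or.inl (Or.inr ⟨1, 0, by norm_num, by simp⟩))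
  have hn : 0 < S.n := zero_lt_one.trans_le S.one_le
  have hz : ∀ α : I, ∃ z ∈ 𝔱.inducedSet, (z : WeakDual ℝ X) b.w₃ = 1 ∧
      ∀ η ≤ α, (z : WeakDual ℝ X) (S.F η) = b.e₃ (S.F η) + S.d α (S.F η) := by
    intro α
    have : Countable (Iic α) := (hI α).to_subtype
    obtain ⟨z, hz, h⟩ := 𝔱.exists_induced_agreeing
      ⟨b.e₃ + S.d α, hsub (Or.inl (Or.inl ⟨α, rfl⟩))⟩
      (fun o : Option (Iic α) => o.elim b.w₃ fun η => S.F η)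
    refine ⟨z, hz, ?_, fun η hη => h (some ⟨η, hη⟩)⟩
    have h0 : (z : WeakDual ℝ X) b.w₃ = b.e₃ b.w₃ + S.d α b.w₃ := h none
    rw [h0, b.e₃w₃, S.d_w₃, add_zero]
  choose z hzD hz3 hzF using hz
  -- `z α - e₃` is dominated by the suprema of the long sequence.
  have hdom : ∀ α x τ, 0 ≤ τ → (∀ ξ, S.d ξ x ≤ τ) → (z α : WeakDual ℝ X) x ≤ b.e₃ x + τ := by
    intro α x τ hτ h
    refine le_of_support hε hεw hNle (c := 1) (s := 0) (by norm_num) one_pos (z α).2 ?_ ?_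
      (Or.inr fun ξ => ?_)
    · simpa using hz3 α
    · simpa using hτ
    · simpa using h ξ
  have hgap : ∀ α l, α ≤ l → (z α : WeakDual ℝ X) (S.F l) ≤ b.e₃ (S.F l) - 1 / S.n := by
    intro α l hl
    have h1 := hdom α (S.F l - (1 / S.n) • S.F α) 0 le_rfl fun ξ => by
      rw [map_sub, map_smul, smul_eq_mul]
      rcases le_or_gt ξ l with h | h
      · have h2 : -1 ≤ 1 / S.n * S.d ξ (S.F α) := by
          rw [div_mul_eq_mul_div, one_mul, le_div_iff₀ hn]
          linarith [(abs_le.1 (S.dF_le ξ α)).1]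
        linarith [S.low ξ l h]
      · rw [S.high ξ l h, S.high ξ α (hl.trans_lt h)]
        simp
    simp only [map_sub, map_smul, smul_eq_mul] at h1
    rw [hzF α α le_rfl] at h1
    have h3 : 1 / S.n * S.d α (S.F α) ≤ 1 / S.n * (-1) :=
      mul_le_mul_of_nonneg_left (S.low α α le_rfl) (by positivity)
    linarith
  have hev : ∀ f, ∃ η, ∀ α, η ≤ α → (z α : WeakDual ℝ X) f = b.e₃ f := by
    intro f
    obtain ⟨η, hη⟩ := S.eventually_zero f
    obtain ⟨η', hη'⟩ := hC {η} (countable_singleton η)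
    refine ⟨η', fun α hα => ?_⟩
    have hlt : η < α := (hη' η rfl).trans_le hα
    have hF : (z α : WeakDual ℝ X) (S.F η) = b.e₃ (S.F η) := by
      rw [hzF α η hlt.le, S.high α η hlt, add_zero]
    have hone : ∀ g : X, ‖g‖ ≤ ‖f‖ → (∀ ξ, η ≤ ξ → S.d ξ g = 0) →
        (z α : WeakDual ℝ X) g ≤ b.e₃ g := by
      intro g hg hg0
      have h1 := hdom α (g + (2 * ‖f‖) • S.F η) 0 le_rfl fun ξ => by
        rw [map_add, map_smul, smul_eq_mul]
        rcases le_or_gt ξ η with h | h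
        · have h2 := (abs_le.1 (S.d_le ξ g)).2
          have h3 := mul_le_mul_of_nonneg_left (S.low ξ η h)
            (by positivity : 0 ≤ 2 * ‖f‖)
          linarith
        · rw [hg0 ξ h.le, S.high ξ η h]
          simp
      simp only [map_add, map_smul, smul_eq_mul] at h1
      rw [hF] at h1
      linarith
    have h1 := hone f le_rfl hη
    have h2 := hone (-f) (by rw [norm_neg]) fun ξ hξ => by rw [map_neg, hη ξ hξ, neg_zero]
    simp only [map_neg] at h2
    linarith
  have hlim : Tendsto z atTop (𝓝 ⟨b.e₃, he⟩) := by
    refine tendsto_dualBallWrt.2 fun f => ?_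
    obtain ⟨η, hη⟩ := hev f
    refine tendsto_const_nhds.congr' ?_
    filter_upwards [eventually_ge_atTop η] with α hα using (hη α hα).symm
  obtain ⟨A, hA, hAc, hcl⟩ := 𝔱.exists_countable_closure
    (e₃_mem_inducedSet hε hεw hNle hsub 𝔱 he) (A := Set.range z)
    (by rintro _ ⟨α, rfl⟩; exact hzD α)
    (mem_closure_of_tendsto hlim (Eventually.of_forall fun α => mem_range_self α))
  have hA' : ∀ φ, ∃ α, φ ∈ A → z α = φ := fun φ => by
    by_cases hφ : φ ∈ A
    · obtain ⟨α, hα⟩ := hA hφ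
      exact ⟨α, fun _ => hα⟩
    · exact ⟨Classical.arbitrary I, fun h => absurd h hφ⟩
  choose g hg using hA'
  obtain ⟨l, hl⟩ := hC (g '' A) (hAc.image g)
  have hclosed : IsClosed {φ : dualBallWrt N |
      (φ : WeakDual ℝ X) (S.F l) ≤ b.e₃ (S.F l) - 1 / S.n} :=
    isClosed_le ((WeakDual.eval_continuous _).comp continuous_subtype_val) continuous_const
  have hmem := closure_minimal (fun φ hφ => by
    have := hgap (g φ) l (hl _ (mem_image_of_mem g hφ)).le
    rwa [hg φ hφ] at this) hclosed hcl
  have h1 : b.e₃ (S.F l) ≤ b.e₃ (S.F l) - 1 / S.n := hmem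
  have h2 : 0 < 1 / S.n := by positivity
  linarith

theorem renormSet_bound (ε : ℝ) (hε : 0 ≤ ε) : ∃ R : ℝ, ∀ φ ∈ renormSet b S ε, ∀ x,
    |φ x| ≤ R * ‖x‖ := by
  have h3 : ∀ x, |b.e₃ x| ≤ ‖WeakDual.toStrongDual b.e₃‖ * ‖x‖ :=
    fun x => (WeakDual.toStrongDual b.e₃).le_opNorm x
  have h1 : ∀ x, |b.e₁ x| ≤ ‖WeakDual.toStrongDual b.e₁‖ * ‖x‖ :=
    fun x => (WeakDual.toStrongDual b.e₁).le_opNorm x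
  refine ⟨‖WeakDual.toStrongDual b.e₃‖ + ‖WeakDual.toStrongDual b.e₁‖ + 2 + ε, ?_⟩
  generalize ‖WeakDual.toStrongDual b.e₃‖ = r₃ at *
  generalize ‖WeakDual.toStrongDual b.e₁‖ = r₁ at *
  rintro φ ((⟨ξ, rfl⟩ | ⟨c, s, hcs, rfl⟩) | ⟨χ, hχ, rfl⟩) x
  all_goals
    have a1 := (abs_nonneg _).trans (h1 x)
    have a3 := (abs_nonneg _).trans (h3 x)
    have a0 := norm_nonneg x
    have aε := mul_nonneg hε a0
    have key : (r₃ + r₁ + 2 + ε) * ‖x‖ = r₃ * ‖x‖ + r₁ * ‖x‖ + 2 * ‖x‖ + ε * ‖x‖ := by ring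
    rw [key]
  · change |b.e₃ x + S.d ξ x| ≤ _
    linarith [abs_add_le (b.e₃ x) (S.d ξ x), S.d_le ξ x, h3 x]
  · change |c * b.e₃ x + s * b.e₁ x| ≤ _
    have hc : |c| ≤ 1 := by rw [← sq_le_one_iff_abs_le_one]; linarith [sq_nonneg s]
    have hs : |s| ≤ 1 := by rw [← sq_le_one_iff_abs_le_one]; linarith [sq_nonneg c]
    have h4 := abs_add_le (c * b.e₃ x) (s * b.e₁ x)
    rw [abs_mul, abs_mul] at h4
    linarith [mul_le_of_le_one_left (abs_nonneg (b.e₃ x)) hc,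
      mul_le_of_le_one_left (abs_nonneg (b.e₁ x)) hs, h1 x, h3 x]
  · change |ε * χ x| ≤ _
    rw [abs_mul, abs_of_nonneg hε]
    linarith [mul_le_mul_of_nonneg_left (hχ x) hε]

/-- If all equivalent renormings have dual balls with retractional skeletons, then each skeleton of
the original dual ball induces the whole ball. -/
theorem full_of_all_skeletons
    (h : ∀ N : X → ℝ, IsEquivNorm N → HasRetractionalSkeleton (dualBallWrt N))
    (𝔰 : RetractionalSkeleton (dualBallWrt fun x : X => ‖x‖)) (p : dualBallWrt fun x : X => ‖x‖) :
    p ∈ 𝔰.inducedSet := by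
  by_contra hp
  obtain ⟨I, _, _, _, hI, hC⟩ := exists_omega_one_order
  obtain ⟨b⟩ := exists_biorthPair 𝔰 hp
  obtain ⟨S⟩ := exists_longSeq 𝔰 hp hI hC b.w₁ b.w₃
  have hpos : 0 < 2 * (‖b.w₁‖ + ‖b.w₃‖ + 1) := by positivity
  have hε : 0 < 1 / (2 * (‖b.w₁‖ + ‖b.w₃‖ + 1)) := by positivity
  have hεw : 1 / (2 * (‖b.w₁‖ + ‖b.w₃‖ + 1)) * (‖b.w₁‖ + ‖b.w₃‖) ≤ 1 / 2 := by
    rw [div_mul_eq_mul_div, div_le_iff₀ hpos]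
    linarith
  generalize 1 / (2 * (‖b.w₁‖ + ‖b.w₃‖ + 1)) = ε at hε hεw
  obtain ⟨R, hR⟩ := renormSet_bound (b := b) (S := S) ε hε.le
  obtain ⟨N, hN, hsub, hNle⟩ := exists_equivNorm_of_set (renormSet b S ε) R ε hε hR
    fun φ hφ => Or.inr ⟨φ, hφ, rfl⟩
  obtain ⟨𝔱⟩ := h N hN
  exact not_skeleton_renorm hI hC hε hεw hN hNle hsub 𝔱

end NoSkeleton

/-- For a Banach space `(X, ‖·‖)`, the following are equivalent:
(i) the dual unit ball `(B_{X*}, w*)` is Corson compact;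
(ii) for every equivalent norm `N` on `X`, `(X, N)` has a 1-projectional skeleton;
(iii) for every equivalent norm `N` on `X`, the dual unit ball of `(X, N)` with the
weak* topology has a retractional skeleton. -/
theorem dualBall_corson_tfae (X : Type u) [NormedAddCommGroup X] [NormedSpace ℝ X]
    [CompleteSpace X] :
    List.TFAE [
      IsCorsonCompact ↥(dualBall X),
      ∀ N : X → ℝ, IsEquivNorm N → Has1ProjectionalSkeletonWrt N,
      ∀ N : X → ℝ, IsEquivNorm N → HasRetractionalSkeleton ↥(dualBallWrt N)] := by
  tfae_have 1 → 2 := fun h N hN => has1ProjectionalSkeletonWrt_of_corson h hN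
  tfae_have 2 → 3 := fun h N hN => hasRetractionalSkeleton_of_proj hN (h N hN)
  tfae_have 3 → 1 := fun h => by
    obtain ⟨𝔰⟩ := h _ isEquivNorm_norm
    exact isCorsonCompact_of_full isEquivNorm_norm 𝔰 (full_of_all_skeletons h 𝔰)
  tfae_finish
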